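/- arXiv:1908.03912 — 6 statements merged into one kernel-verified Lean document; each statement's English description precedes it below -/
import Mathlib

section
/- For all integers 1 ≤ k ≤ n, p(n,k) = r(n-1,k-1); that is, the number of separable permutations of [n] whose initial ascending run has length k equals the number of Schröder paths of semilength n−1 with exactly k−1 hills. -/
/-!
Both families are put in bijection with the same binary-unary trees, whose shape comes from the
equation `F = xt + xtF + FS`, with `F` the generating function of nonempty separable permutations by
size and initial ascending run, and `S` its value at `t = 1`.

For permutations: every separable permutation of size at least two is a direct sum or a skew sum
(`exists_cut`), and never both (`cut_excl`). Hence it is uniquely either `1 ⊕ σ`, or `α ⊖ β` with `α`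
not a skew sum, or `α ⊕ β` with `α` a skew sum (`exists_realizes`, `realizes_unique`). So pairs
`(α, β)` of arbitrary separable permutations account for everything except `1` and `1 ⊕ σ`. The
initial ascending run grows by one in passing from `σ` to `1 ⊕ σ`. It is that of `α` in the other
two cases: `α ⊖ β` has a descent at the junction, and a skew sum `α` already has a descent.

For paths: a nonempty path starts with a hill `UD`, with `H`, or with `U w D` for a nonempty path `w`;
the last two are the arches, indexed by arbitrary paths `w`, and contribute no hill at height `0`
(`exists_word`, `word_injective`, `hills_word`).

Permutations are handled through one-line notation as lists of distinct naturals; `Realizes` relates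
trees to lists of arbitrary distinct values, and `stdList` is the realization by consecutive values.
-/

/-- A step of a Schröder path: up `(1,1)`, down `(1,-1)`, or horizontal `(2,0)`. -/
inductive SStep : Type
  | U | D | H
  deriving DecidableEq

/-- `IsSchroeder n w` : `w` is a Schröder path of semilength `n`. -/
def IsSchroeder (n : ℕ) (w : List SStep) : Prop :=
  w.count SStep.U = w.count SStep.D ∧
  w.count SStep.U + w.count SStep.H = n ∧
  ∀ i : ℕ, (w.take i).count SStep.D ≤ (w.take i).count SStep.U

/-- The number of hills: occurrences of the factor `UD` starting at height `0`. -/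
def hills (w : List SStep) : ℕ :=
  ((Finset.range w.length).filter (fun i =>
    w[i]? = some SStep.U ∧ w[i+1]? = some SStep.D ∧
    (w.take i).count SStep.U = (w.take i).count SStep.D)).card

/-- The number of horizontal steps at height `0`. -/
def h0 (w : List SStep) : ℕ :=
  ((Finset.range w.length).filter (fun i =>
    w[i]? = some SStep.H ∧
    (w.take i).count SStep.U = (w.take i).count SStep.D)).card

/-- The number of horizontal steps at positive height. -/
def hpos (w : List SStep) : ℕ :=
  ((Finset.range w.length).filter (fun i =>
    w[i]? = some SStep.H ∧
    (w.take i).count SStep.D < (w.take i).count SStep.U)).card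

/-- `r n k` : the number of Schröder paths of semilength `n` with exactly `k` hills. -/
noncomputable def r (n k : ℕ) : ℕ :=
  Nat.card {w : List SStep // IsSchroeder n w ∧ hills w = k}

/-- A little Schröder path: a Schröder path with no horizontal step at height `0`. -/
def IsLittle (n : ℕ) (w : List SStep) : Prop :=
  IsSchroeder n w ∧ h0 w = 0

/-- `s n k` : the number of little Schröder paths of semilength `n` with exactly `k` hills. -/
noncomputable def s (n k : ℕ) : ℕ :=
  Nat.card {w : List SStep // IsLittle n w ∧ hills w = k}

/-- The pattern `2413` as a permutation of `Fin 4` (zero-indexed values `1,3,0,2`). -/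
def pattern2413 : Equiv.Perm (Fin 4) :=
  ⟨![1, 3, 0, 2], ![2, 0, 3, 1], by decide, by decide⟩

/-- The pattern `3142` as a permutation of `Fin 4` (zero-indexed values `2,0,3,1`). -/
def pattern3142 : Equiv.Perm (Fin 4) :=
  ⟨![2, 0, 3, 1], ![1, 3, 0, 2], by decide, by decide⟩

/-- `ContainsPat π σ` : the permutation `π` contains the pattern `σ`. -/
def ContainsPat {n m : ℕ} (π : Equiv.Perm (Fin n)) (σ : Equiv.Perm (Fin m)) : Prop :=
  ∃ f : Fin m ↪o Fin n, ∀ a b : Fin m, σ a < σ b ↔ π (f a) < π (f b)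

/-- A separable permutation avoids both `2413` and `3142`. -/
def Separable {n : ℕ} (π : Equiv.Perm (Fin n)) : Prop :=
  ¬ ContainsPat π pattern2413 ∧ ¬ ContainsPat π pattern3142

/-- `iar π` : the length of the initial ascending run of `π`, i.e. the largest
`k ≤ n` such that the first `k` values of `π` are increasing. -/
def iar {n : ℕ} (π : Equiv.Perm (Fin n)) : ℕ :=
  Nat.findGreatest (fun k => ∀ i j : Fin n, (i : ℕ) < (j : ℕ) → (j : ℕ) < k → π i < π j) n

/-- `p n k` : the number of separable permutations of `[n]` with `iar` equal to `k`. -/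
noncomputable def p (n k : ℕ) : ℕ :=
  Nat.card {π : Equiv.Perm (Fin n) // Separable π ∧ iar π = k}

/-- `compStat π` : the number of indices `k ∈ {1,…,n}` such that the first `k`
values of `π` are exactly `{1,…,k}`. -/
def compStat {n : ℕ} (π : Equiv.Perm (Fin n)) : ℕ :=
  ((Finset.Icc 1 n).filter
    (fun k => ∀ i : Fin n, (i : ℕ) < k → (π i : ℕ) < k)).card

namespace SepSchr

/-! ### Trees -/

/-- Trees encoding both separable permutations and Schröder paths. As permutations: `leaf` is the
permutation `1`, `cons t` is `1 ⊕ t`, and `pair a b` is `a ⊕ b` if `a` is a skew sum and `a ⊖ b`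
otherwise. As paths: `leaf` is empty, `cons t` is `UD` followed by `t`, and `pair a b` is the arch
over `b` followed by `a`. -/
inductive Tree : Type
  | leaf : Tree
  | cons : Tree → Tree
  | pair : Tree → Tree → Tree

namespace Tree

/-- Size of the encoded permutation, which is the semilength of the encoded path plus one. -/
def size : Tree → ℕ
  | leaf => 1
  | cons t => size t + 1
  | pair a b => size a + size b

/-- Initial ascending run of the encoded permutation, which is the number of hills of the encoded
path plus one. -/
def stat : Tree → ℕ
  | leaf => 1
  | cons t => stat t + 1
  | pair a _ => stat a

/-- Whether the encoded permutation is a skew sum of two nonempty permutations. -/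
def skew : Tree → Bool
  | leaf => false
  | cons _ => false
  | pair a _ => !skew a

theorem size_pos (t : Tree) : 0 < t.size := by
  induction t <;> grind [size]

theorem stat_pos (t : Tree) : 0 < t.stat := by
  induction t <;> grind [stat]

end Tree

open SStep

/-! ### Schröder words -/

/-- Schröder paths of unspecified semilength. -/
def Good (w : List SStep) : Prop :=
  w.count U = w.count D ∧ ∀ i : ℕ, (w.take i).count D ≤ (w.take i).count U

/-- The arch over `w`: `U w D`, with `H` standing in for the arch over the empty path so that arches
are exactly the primitive paths other than the hill `UD`. -/
def arch (w : List SStep) : List SStep :=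
  if w = [] then [H] else U :: (w ++ [D])

/-- The Schröder path encoded by a tree. -/
def word : Tree → List SStep
  | .leaf => []
  | .cons t => [U, D] ++ word t
  | .pair a b => arch (word b) ++ word a

theorem prefix_iff {w : List SStep} {h : ℕ} :
    (∀ i : ℕ, (w.take i).count D ≤ (w.take i).count U + h) ↔
      ∀ v, v <+: w → v.count D ≤ v.count U + h := by
  constructor
  · intro hw v hv
    have := hw v.length
    rwa [← List.prefix_iff_eq_take.1 hv] at this
  · intro hw i
    exact hw _ (List.take_prefix i w)

theorem good_iff {w : List SStep} :
    Good w ↔ w.count U = w.count D ∧ ∀ v, v <+: w → v.count D ≤ v.count U := by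
  have := @prefix_iff w 0
  simp only [add_zero] at this
  rw [Good, this]

theorem prefix_append_cases {x u v : List SStep} (h : x <+: u ++ v) :
    x <+: u ∨ ∃ y, x = u ++ y ∧ y <+: v := by
  obtain ⟨z, hz⟩ := h
  rcases List.append_eq_append_iff.1 hz with ⟨y, h1, -⟩ | ⟨y, h1, h2⟩
  · exact .inl ⟨y, h1.symm⟩
  · exact .inr ⟨y, h1, z, h2.symm⟩

theorem good_append {u v : List SStep} (hu : Good u) (hv : Good v) : Good (u ++ v) := by
  rw [good_iff] at *
  refine ⟨by simp [hu.1, hv.1], fun x hx => ?_⟩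
  rcases prefix_append_cases hx with h | ⟨y, rfl, hy⟩
  · exact hu.2 _ h
  · have := hv.2 _ hy
    simp [hu.1]; omega

theorem good_of_append {u v : List SStep} (hu : Good u) (h : Good (u ++ v)) : Good v := by
  rw [good_iff] at *
  obtain ⟨h1, h2⟩ := h
  simp only [List.count_append] at h1
  refine ⟨by omega, fun x hx => ?_⟩
  have := h2 (u ++ x) ((List.prefix_append_right_inj u).2 hx)
  simp only [List.count_append] at this
  omega

theorem good_nil : Good [] := by simp [Good]

theorem good_arch {w : List SStep} (hw : Good w) : Good (arch w) := by
  unfold arch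
  split_ifs with h
  · rw [good_iff]
    refine ⟨by decide, fun v hv => ?_⟩
    have : D ∉ v := fun hD => by simpa using hv.subset hD
    simp [List.count_eq_zero_of_not_mem this]
  · rw [good_iff] at *
    refine ⟨by simp [hw.1], fun v hv => ?_⟩
    rcases List.prefix_cons_iff.1 hv with rfl | ⟨y, rfl, hy⟩
    · simp
    rcases prefix_append_cases hy with h | ⟨z, rfl, hz⟩
    · have := hw.2 _ h
      simp; omega
    · have := hz.sublist.count_le D
      simp [hw.1] at *; omega

theorem good_UD : Good [U, D] := by
  refine ⟨by decide, fun i => ?_⟩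
  rcases i with _ | _ | i <;> simp

theorem good_word (t : Tree) : Good (word t) := by
  induction t with
  | leaf => exact good_nil
  | cons t ih => exact good_append good_UD ih
  | pair a b iha ihb => exact good_append (good_arch ihb) iha

theorem arch_count (w : List SStep) (hw : Good w) :
    (arch w).count U + (arch w).count H = w.count U + w.count H + 1 := by
  unfold arch
  split_ifs with h
  · subst h; decide
  · simp; omega

theorem word_count (t : Tree) : (word t).count U + (word t).count H + 1 = t.size := by
  induction t with
  | leaf => rfl
  | cons t ih => simp [word, Tree.size]; omega
  | pair a b iha ihb =>
    have := arch_count _ (good_word b)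
    simp only [word, Tree.size, List.count_append]; omega

/-- Splitting at the first step that goes below height `-h`; for `h = 0` the part before that step
is a Schröder path. -/
theorem exists_first_below (w : List SStep) : ∀ h : ℕ, w.count U + h < w.count D →
    ∃ u v, w = u ++ D :: v ∧ u.count D = u.count U + h ∧
      ∀ x, x <+: u → x.count D ≤ x.count U + h := by
  induction w with
  | nil => intro h hw; simp at hw
  | cons a w ih =>
    intro h hw
    cases a with
    | U =>
      obtain ⟨u, v, rfl, h1, h2⟩ := ih (h + 1) (by simp at hw; omega)
      refine ⟨U :: u, v, rfl, by simp; omega, fun x hx => ?_⟩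
      rcases List.prefix_cons_iff.1 hx with rfl | ⟨y, rfl, hy⟩
      · simp
      · have := h2 _ hy
        simp; omega
    | D =>
      rcases h with _ | h
      · exact ⟨[], w, rfl, by simp, by simp⟩
      obtain ⟨u, v, rfl, h1, h2⟩ := ih h (by simp at hw; omega)
      refine ⟨D :: u, v, rfl, by simp; omega, fun x hx => ?_⟩
      rcases List.prefix_cons_iff.1 hx with rfl | ⟨y, rfl, hy⟩
      · simp
      · have := h2 _ hy
        simp; omega
    | H =>
      obtain ⟨u, v, rfl, h1, h2⟩ := ih h (by simp at hw; omega)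
      refine ⟨H :: u, v, rfl, by simp; omega, fun x hx => ?_⟩
      rcases List.prefix_cons_iff.1 hx with rfl | ⟨y, rfl, hy⟩
      · simp
      · have := h2 _ hy
        simp; omega

theorem exists_word (w : List SStep) (hw : Good w) : ∃ t, word t = w := by
  induction hn : w.length using Nat.strong_induction_on generalizing w with
  | _ n ih =>
    subst hn
    match w, hw with
    | [], _ => exact ⟨.leaf, rfl⟩
    | D :: w, hw =>
      have := hw.2 1
      simp at this
    | H :: w, hw =>
      have hw' : Good w := good_of_append (u := [H]) (good_arch good_nil) hw
      obtain ⟨t, rfl⟩ := ih w.length (by simp) w hw' rfl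
      exact ⟨.pair t .leaf, rfl⟩
    | U :: w, hw =>
      obtain ⟨u, v, rfl, h1, h2⟩ := exists_first_below w 0 (by have := hw.1; simp at this; omega)
      have hu : Good u := good_iff.2 ⟨by omega, h2⟩
      have hU : Good (U :: (u ++ [D])) := by
        by_cases h : u = []
        · subst h; exact good_UD
        · have := good_arch hu
          rwa [arch, if_neg h] at this
      have hv : Good v := good_of_append hU (by simpa using hw)
      obtain ⟨a, ha⟩ := ih v.length (by simp; omega) v hv rfl
      by_cases h : u = []
      · subst h
        exact ⟨.cons a, by simp [word, ha]⟩
      · obtain ⟨b, hb⟩ := ih u.length (by simp) u hu rfl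
        exact ⟨.pair a b, by simp [word, ha, hb, arch, h]⟩

/-- First-return decompositions are unique. -/
theorem first_return_inj {u u' v v' : List SStep} (hu : Good u) (hu' : Good u')
    (h : u ++ D :: v = u' ++ D :: v') : u = u' ∧ v = v' := by
  have key : ∀ {u u' v v' : List SStep}, Good u → Good u' → ∀ x, u' = u ++ x →
      D :: v = x ++ D :: v' → x = [] := by
    intro u u' v v' hu hu' x hx h
    rcases x with _ | ⟨a, x⟩
    · rfl
    · simp only [List.cons_append, List.cons.injEq] at h
      obtain ⟨rfl, -⟩ := h
      have := (good_iff.1 hu').2 (u ++ [D]) (by rw [hx]; exact ⟨x, by simp⟩)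
      have h1 := hu.1
      simp at this; omega
  rcases List.append_eq_append_iff.1 h with ⟨x, h1, h2⟩ | ⟨x, h1, h2⟩
  · have := key hu hu' x h1 h2
    subst this
    simp_all
  · have := key hu' hu x h1 h2
    subst this
    simp_all

theorem word_eq_nil {t : Tree} (h : word t = []) : t = .leaf := by
  cases t with
  | leaf => rfl
  | cons t => simp [word] at h
  | pair a b => simp [word, arch] at h; split_ifs at h <;> simp at h

theorem word_injective : Function.Injective word := by
  intro t
  induction t with
  | leaf => intro t' h; exact (word_eq_nil h.symm).symm
  | cons t ih =>
    intro t' h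
    cases t' with
    | leaf => exact word_eq_nil h
    | cons t' => rw [ih (List.append_cancel_left h)]
    | pair a b =>
      exfalso
      simp only [word, arch] at h
      split_ifs at h with hb
      · simp at h
      · have := first_return_inj (u := []) (v := word t) (u' := word b) (v' := word a) good_nil
          (good_word b) (by simpa using h)
        exact hb this.1.symm
  | pair a b iha ihb =>
    intro t' h
    cases t' with
    | leaf => exact word_eq_nil h
    | cons t =>
      exfalso
      simp only [word, arch] at h
      split_ifs at h with hb
      · simp at h
      · have := first_return_inj (u := []) (v := word t) (u' := word b) (v' := word a) good_nil
          (good_word b) (by simpa using h.symm)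
        exact hb this.1.symm
    | pair a' b' =>
      simp only [word, arch] at h
      split_ifs at h with hb hb' hb'
      · rw [word_eq_nil hb, word_eq_nil hb', iha (List.append_cancel_left h)]
      · simp at h
      · simp at h
      · have := first_return_inj (good_word b) (good_word b') (v := word a) (v' := word a')
          (by simpa using h)
        rw [iha this.2, ihb this.1]

/-- Hills of `u ++ v` with `u` balanced: those starting inside `u`, then those of `v`. -/
theorem hills_append {u v : List SStep} (hu : u.count U = u.count D) :
    hills (u ++ v) = ((Finset.range u.length).filter (fun i =>
      (u ++ v)[i]? = some U ∧ (u ++ v)[i+1]? = some D ∧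
      ((u ++ v).take i).count U = ((u ++ v).take i).count D)).card + hills v := by
  unfold hills
  simp only [Finset.card_filter]
  rw [List.length_append, Finset.sum_range_add]
  congr 1
  refine Finset.sum_congr rfl fun i _ => ?_
  have h1 : (u ++ v)[u.length + i]? = v[i]? := by
    rw [List.getElem?_append_right (by omega)]; congr 1; omega
  have h2 : (u ++ v)[u.length + i + 1]? = v[i + 1]? := by
    rw [List.getElem?_append_right (by omega)]; congr 1; omega
  have h3 : (u ++ v).take (u.length + i) = u ++ v.take i := by
    rw [List.take_append]; simp
  simp only [h1, h2, h3, List.count_append, hu, Nat.add_left_cancel_iff]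

theorem hills_UD (v : List SStep) : hills ([U, D] ++ v) = hills v + 1 := by
  rw [hills_append (by decide), add_comm]
  congr 1

theorem hills_arch {w : List SStep} (hw : Good w) (v : List SStep) :
    hills (arch w ++ v) = hills v := by
  rw [hills_append (good_arch hw).1]
  simp only [Nat.add_eq_right, Finset.card_eq_zero, Finset.filter_eq_empty_iff, Finset.mem_range]
  rintro i hi ⟨h1, h2, h3⟩
  unfold arch at *
  split_ifs at * with h
  · simp at hi; subst hi; simp at h1
  · obtain ⟨a, w, rfl⟩ := List.exists_cons_of_ne_nil h
    rcases i with _ | i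
    · simp at h2
      subst h2
      have := hw.2 1
      simp at this
    · simp at hi
      have h4 : ((U :: (a :: w ++ [D])) ++ v).take (i + 1) = U :: (a :: w).take i := by
        simp only [List.cons_append, List.take_succ_cons, List.cons.injEq, true_and]
        rw [← List.cons_append, ← List.cons_append, List.append_assoc, List.take_append_of_le_length]
        simp; omega
      rw [h4] at h3
      have := hw.2 i
      simp at h3; omega

theorem hills_word (t : Tree) : hills (word t) + 1 = t.stat := by
  induction t with
  | leaf => rfl
  | cons t ih => rw [word, hills_UD, Tree.stat, ih]
  | pair a b iha ihb => rw [word, hills_arch (good_word b), Tree.stat, iha]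

theorem r_eq_trees (n k : ℕ) :
    r n k = Nat.card {t : Tree // t.size = n + 1 ∧ t.stat = k + 1} := by
  symm
  refine Nat.card_congr (Equiv.ofBijective (fun t => ⟨word t.1, ?_⟩) ⟨?_, ?_⟩)
  · obtain ⟨t, h1, h2⟩ := t
    have hg := good_word t
    have := word_count t
    have := hills_word t
    exact ⟨⟨hg.1, by simp only; omega, hg.2⟩, by simp only; omega⟩
  · intro a b h
    exact Subtype.ext (word_injective (congrArg Subtype.val h))
  · rintro ⟨w, ⟨h1, h2, h3⟩, h4⟩
    obtain ⟨t, rfl⟩ := exists_word w ⟨h1, h3⟩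
    have := word_count t
    have := hills_word t
    exact ⟨⟨t, by omega, by omega⟩, rfl⟩

/-! ### Cuts and separability of lists -/

/-- The order `<` for `b = true` and the reverse order for `b = false`; used to treat direct and
skew sums uniformly. -/
def rel (b : Bool) (x y : ℕ) : Prop := if b then x < y else y < x

theorem rel_trans {b x y z} (h : rel b x y) (h' : rel b y z) : rel b x z := by
  cases b <;> simp only [rel] at * <;> simp at * <;> omega

theorem rel_trich {b x y} (h : x ≠ y) : rel b x y ∨ rel b y x := by
  cases b <;> simp only [rel] <;> simp <;> omega

theorem rel_asymm {b x y} (h : rel b x y) (h' : rel b y x) : False := by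
  cases b <;> simp only [rel] at * <;> simp at * <;> omega

theorem rel_not {b x y} : rel (!b) x y ↔ rel b y x := by
  cases b <;> simp [rel]

/-- Every entry of `l₁` is `rel b`-below every entry of `l₂`. -/
def Below (b : Bool) (l₁ l₂ : List ℕ) : Prop := ∀ x ∈ l₁, ∀ y ∈ l₂, rel b x y

/-- The list is a direct sum (`b = true`) or a skew sum (`b = false`) of two nonempty parts. -/
def Cut (b : Bool) (l : List ℕ) : Prop :=
  ∃ l₁ l₂, l₁ ≠ [] ∧ l₂ ≠ [] ∧ l = l₁ ++ l₂ ∧ Below b l₁ l₂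

/-- Avoidance of `2413` (`b = true`) or of its complement `3142` (`b = false`). -/
def Av (b : Bool) (l : List ℕ) : Prop :=
  ∀ x y z t, rel b x y → rel b y z → rel b z t → ¬ [y, t, x, z].Sublist l

theorem Av.sublist {b l l'} (h : Av b l) (hl : l'.Sublist l) : Av b l' :=
  fun x y z t h1 h2 h3 hs => h x y z t h1 h2 h3 (hs.trans hl)

theorem av_append {b c : Bool} {l₁ l₂ : List ℕ} (h₁ : Av c l₁) (h₂ : Av c l₂)
    (h : Below b l₁ l₂) : Av c (l₁ ++ l₂) := by
  intro x y z t hxy hyz hzt hs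
  obtain ⟨u, v, he, hu, hv⟩ := List.sublist_append_iff.1 hs
  have hB : ∀ x ∈ u, ∀ y ∈ v, rel b x y := fun x hx y hy => h x (hu.subset hx) y (hv.subset hy)
  rcases u with _ | ⟨u1, _ | ⟨u2, _ | ⟨u3, _ | ⟨u4, u⟩⟩⟩⟩
  · simp at he; subst he; exact h₂ x y z t hxy hyz hzt hv
  · simp at he; obtain ⟨rfl, rfl⟩ := he
    cases b <;> cases c <;> simp [rel] at * <;> omega
  · simp at he; obtain ⟨rfl, rfl, rfl⟩ := he
    cases b <;> cases c <;> simp [rel] at * <;> omega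
  · simp at he; obtain ⟨rfl, rfl, rfl, rfl⟩ := he
    cases b <;> cases c <;> simp [rel] at * <;> omega
  · simp at he; obtain ⟨rfl, rfl, rfl, rfl, rfl, rfl⟩ := he
    exact h₁ _ _ _ _ hxy hyz hzt hu

theorem av_singleton (b : Bool) (x : ℕ) : Av b [x] := by
  intro _ _ _ _ _ _ _ h
  simpa using h.length_le

/-- If no element on the `rel b`-upper side of `x` precedes one on the lower side, the list splits
at `x`. -/
theorem split_at (b : Bool) (x : ℕ) (l : List ℕ) (hx : x ∉ l)
    (h : ∀ c d, rel b x c → rel b d x → ¬ [c, d].Sublist l) :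
    ∃ l₁ l₂, l = l₁ ++ l₂ ∧ (∀ y ∈ l₁, rel b y x) ∧ ∀ y ∈ l₂, rel b x y := by
  induction l with
  | nil => exact ⟨[], [], by simp⟩
  | cons a l ih =>
    simp only [List.mem_cons, not_or] at hx
    rcases rel_trich (b := b) hx.1 with ha | ha
    · refine ⟨[], a :: l, rfl, by simp, ?_⟩
      intro y hy
      rcases List.mem_cons.1 hy with rfl | hy
      · exact ha
      · rcases rel_trich (b := b) (x := x) (y := y) (by rintro rfl; exact hx.2 hy) with h' | h'
        · exact h'
        · exact absurd (by simpa using hy) (h a y ha h')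
    · obtain ⟨l₁, l₂, rfl, h1, h2⟩ := ih hx.2 fun c d hc hd hs => h c d hc hd (hs.cons _)
      refine ⟨a :: l₁, l₂, rfl, ?_, h2⟩
      simpa using ⟨ha, h1⟩

/-- Prepending an entry `x` to a list with a cut `A | B`: avoidance forces the entries of `B` on the
lower side of `x` to come first, so either the boundary inside `B` is a cut of the same kind, or `x`
is extremal and can be cut off. -/
theorem cut_cons {b : Bool} {x : ℕ} {l : List ℕ} (hx : x ∉ l) (hl : Cut b l)
    (hav : Av (!b) (x :: l)) : Cut b (x :: l) ∨ Cut (!b) (x :: l) := by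
  obtain ⟨A, B, hA, hB, rfl, hAB⟩ := hl
  obtain ⟨a, ha⟩ := List.exists_mem_of_ne_nil A hA
  simp only [List.mem_append, not_or] at hx
  by_cases hax : rel b a x
  · obtain ⟨B₁, B₂, rfl, h1, h2⟩ := split_at b x B hx.2 fun c d hc hd hs => by
      -- otherwise `x a c d` is an occurrence of the forbidden pattern
      have had : rel b a d := hAB a ha d (hs.subset (by simp))
      refine hav c x d a (rel_not.2 hc) (rel_not.2 hd) (rel_not.2 had) ?_
      exact ((List.singleton_sublist.2 ha).append hs).cons_cons x
    by_cases hB₂ : B₂ = []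
    · subst hB₂
      right
      refine ⟨[x], A ++ (B₁ ++ []), by simp, by simp [hA], rfl, ?_⟩
      obtain ⟨y, hy⟩ := List.exists_mem_of_ne_nil _ hB
      simp only [List.append_nil] at *
      intro x' hx' z hz
      simp only [List.mem_singleton] at hx'
      subst hx'
      rw [rel_not]
      rcases List.mem_append.1 hz with hz | hz
      · exact rel_trans (hAB z hz y hy) (h1 y hy)
      · exact h1 z hz
    · left
      refine ⟨x :: (A ++ B₁), B₂, by simp, hB₂, by simp, ?_⟩
      intro y hy z hz
      simp only [List.mem_cons, List.mem_append] at hy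
      rcases hy with rfl | hy | hy
      · exact h2 z hz
      · exact hAB y hy z (by simp [hz])
      · exact rel_trans (h1 y hy) (h2 z hz)
  · left
    have hxa : rel b x a :=
      (rel_trich (b := b) (x := x) (y := a) (by rintro rfl; exact hx.1 ha)).resolve_right hax
    refine ⟨x :: A, B, by simp, hB, rfl, ?_⟩
    intro y hy z hz
    rcases List.mem_cons.1 hy with rfl | hy
    · exact rel_trans hxa (hAB a ha z hz)
    · exact hAB y hy z hz

/-- A separable list with at least two entries is a direct sum or a skew sum. -/
theorem exists_cut (l : List ℕ) (hn : l.Nodup) (hl : 2 ≤ l.length) (hav : ∀ b, Av b l) :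
    Cut true l ∨ Cut false l := by
  induction l with
  | nil => simp at hl
  | cons x l ih =>
    rw [List.nodup_cons] at hn
    rcases l with _ | ⟨y, _ | ⟨z, l⟩⟩
    · simp at hl
    · have hxy : x ≠ y := by simpa using hn.1
      rcases rel_trich (b := true) hxy with h | h
      · exact .inl ⟨[x], [y], by simp, by simp, rfl, by simpa [Below] using h⟩
      · exact .inr ⟨[x], [y], by simp, by simp, rfl, by simpa [Below, rel] using h⟩
    · rcases ih hn.2 (by simp) (fun b => (hav b).sublist (List.sublist_cons_self _ _)) with h | h
      · exact cut_cons hn.1 h (hav _)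
      · exact (cut_cons hn.1 h (hav _)).symm

/-- A cut compares the first and the last entry, so the two kinds exclude each other. -/
theorem Cut.rel_head_last {b : Bool} {l : List ℕ} (h : Cut b l) (hl : l ≠ []) :
    rel b (l.head hl) (l.getLast hl) := by
  obtain ⟨A, B, hA, hB, rfl, hAB⟩ := h
  rw [List.head_append_of_ne_nil hA, List.getLast_append_of_ne_nil _ hB]
  exact hAB _ (List.head_mem hA) _ (List.getLast_mem hB)

theorem Cut.ne_nil {b : Bool} {l : List ℕ} (h : Cut b l) : l ≠ [] := by
  obtain ⟨A, B, hA, hB, rfl, hAB⟩ := h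
  simp [hA]

theorem cut_excl {l : List ℕ} (h : Cut true l) (h' : Cut false l) : False :=
  rel_asymm (h.rel_head_last h.ne_nil) (rel_not.1 (h'.rel_head_last h.ne_nil))

theorem not_cut_singleton (b : Bool) (x : ℕ) : ¬ Cut b [x] := by
  rintro ⟨A, B, hA, hB, h, -⟩
  have := congrArg List.length h
  have := List.length_pos_iff.2 hA
  have := List.length_pos_iff.2 hB
  simp at *; omega

/-- A first cut: the left part has no cut of the same kind. -/
theorem exists_first_cut {b : Bool} {l : List ℕ} (h : Cut b l) :
    ∃ A B, A ≠ [] ∧ B ≠ [] ∧ l = A ++ B ∧ Below b A B ∧ ¬ Cut b A := by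
  induction hn : l.length using Nat.strong_induction_on generalizing l with
  | _ n ih =>
    obtain ⟨A, B, hA, hB, rfl, hAB⟩ := h
    by_cases hc : Cut b A
    · have hB' := List.length_pos_iff.2 hB
      obtain ⟨A', B', hA', hB', rfl, hAB', h'⟩ :=
        ih A.length (by simp at hn; omega) hc rfl
      refine ⟨A', B' ++ B, hA', by simp [hB], by simp, ?_, h'⟩
      intro x hx y hy
      rcases List.mem_append.1 hy with hy | hy
      · exact hAB' x hx y hy
      · exact hAB x (by simp [hx]) y hy
    · exact ⟨A, B, hA, hB, rfl, hAB, hc⟩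

theorem first_cut_unique {b : Bool} {A A' B B' : List ℕ} (hA : A ≠ []) (hA' : A' ≠ [])
    (h : A ++ B = A' ++ B')
    (hAB : Below b A B) (hAB' : Below b A' B') (hc : ¬ Cut b A) (hc' : ¬ Cut b A') :
    A = A' ∧ B = B' := by
  have key : ∀ {A A' B B' x : List ℕ}, A ≠ [] → A' = A ++ x → B = x ++ B' → Below b A B →
      ¬ Cut b A' → x = [] := by
    intro A A' B B' x hA h1 h2 hB hc
    by_contra hx
    exact hc ⟨A, x, hA, hx, h1, fun y hy z hz => hB y hy z (by simp [h2, hz])⟩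
  rcases List.append_eq_append_iff.1 h with ⟨x, h1, h2⟩ | ⟨x, h1, h2⟩
  · have := key hA h1 h2 hAB hc'
    subst this; simp_all
  · have := key hA' h1 h2 hAB' hc
    subst this; simp_all

/-! ### Lists realizing a tree -/

/-- `Realizes t l`: the list `l` of distinct naturals is order-isomorphic to the permutation encoded
by `t`. Only relative order matters, so sublists need no standardization. -/
def Realizes : Tree → List ℕ → Prop
  | .leaf, l => ∃ x, l = [x]
  | .cons t, l => ∃ x l', l = x :: l' ∧ Realizes t l' ∧ ∀ y ∈ l', x < y
  | .pair a b, l => ∃ l₁ l₂, l = l₁ ++ l₂ ∧ Realizes a l₁ ∧ Realizes b l₂ ∧ Below a.skew l₁ l₂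

theorem Realizes.length {t : Tree} {l : List ℕ} (h : Realizes t l) : l.length = t.size := by
  induction t generalizing l with
  | leaf => obtain ⟨x, rfl⟩ := h; rfl
  | cons t ih => obtain ⟨x, l', rfl, h, -⟩ := h; simp [Tree.size, ih h]
  | pair a b iha ihb =>
    obtain ⟨l₁, l₂, rfl, h1, h2, -⟩ := h
    simp [Tree.size, iha h1, ihb h2]

theorem Realizes.ne_nil {t : Tree} {l : List ℕ} (h : Realizes t l) : l ≠ [] := by
  rw [← List.length_pos_iff, h.length]; exact t.size_pos

theorem Realizes.av {t : Tree} {l : List ℕ} (h : Realizes t l) (c : Bool) : Av c l := by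
  induction t generalizing l with
  | leaf => obtain ⟨x, rfl⟩ := h; exact av_singleton _ _
  | cons t ih =>
    obtain ⟨x, l', rfl, h, hx⟩ := h
    exact av_append (b := true) (l₁ := [x]) (av_singleton _ _) (ih h) (by simpa [Below, rel] using hx)
  | pair a b iha ihb =>
    obtain ⟨l₁, l₂, rfl, h1, h2, h⟩ := h
    exact av_append (iha h1) (ihb h2) h

theorem Realizes.cut {t : Tree} {l : List ℕ} (h : Realizes t l) :
    t.skew = true ↔ Cut false l := by
  cases t with
  | leaf => obtain ⟨x, rfl⟩ := h; simp [Tree.skew, not_cut_singleton]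
  | cons t =>
    obtain ⟨x, l', rfl, h, hx⟩ := h
    simp only [Tree.skew, Bool.false_eq_true, false_iff]
    exact cut_excl ⟨[x], l', by simp, h.ne_nil, rfl, by simpa [Below, rel] using hx⟩
  | pair a b =>
    obtain ⟨l₁, l₂, rfl, h1, h2, h⟩ := h
    have hc : Cut a.skew (l₁ ++ l₂) := ⟨l₁, l₂, h1.ne_nil, h2.ne_nil, rfl, h⟩
    cases ha : a.skew
    · simpa [Tree.skew, ha] using hc
    · rw [ha] at hc
      simpa [Tree.skew, ha] using cut_excl hc

theorem Realizes.not_cut {t : Tree} {l : List ℕ} (h : Realizes t l) : ¬ Cut t.skew l := by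
  cases ht : t.skew
  · rw [← h.cut, ht]; simp
  · exact fun hc => cut_excl hc (h.cut.1 ht)

/-- The tree of a separable list is read off from its first cut: a skew sum gives `pair`; a direct sum
gives `cons` if its first component is a single entry, and otherwise `pair`, the first component
then being a skew sum. -/
theorem exists_realizes (l : List ℕ) (hl : l ≠ []) (hn : l.Nodup) (hav : ∀ b, Av b l) :
    ∃ t, Realizes t l := by
  induction hlen : l.length using Nat.strong_induction_on generalizing l with
  | _ n ih =>
    subst hlen
    by_cases h1 : l.length < 2
    · rcases l with _ | ⟨x, _ | ⟨y, l⟩⟩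
      · exact absurd rfl hl
      · exact ⟨.leaf, x, rfl⟩
      · simp at h1
    have key : ∀ A B, A ≠ [] → B ≠ [] → l = A ++ B →
        ∃ a b, Realizes a A ∧ Realizes b B := by
      rintro A B hA hB rfl
      have hA' := List.length_pos_iff.2 hA
      have hB' := List.length_pos_iff.2 hB
      obtain ⟨a, ha⟩ := ih A.length (by simp; omega) A hA (hn.sublist (List.sublist_append_left _ _))
        (fun b => (hav b).sublist (List.sublist_append_left _ _)) rfl
      obtain ⟨b, hb⟩ := ih B.length (by simp; omega) B hB (hn.sublist (List.sublist_append_right _ _))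
        (fun b => (hav b).sublist (List.sublist_append_right _ _)) rfl
      exact ⟨a, b, ha, hb⟩
    rcases exists_cut l hn (by omega) hav with h | h <;>
    obtain ⟨A, B, hA, hB, rfl, hAB, hc⟩ := exists_first_cut h <;>
    obtain ⟨a, b, ha, hb⟩ := key A B hA hB rfl
    · by_cases hA1 : A.length < 2
      · rcases A with _ | ⟨x, _ | ⟨y, A⟩⟩
        · exact absurd rfl hA
        · exact ⟨.cons b, x, B, rfl, hb, by simpa [Below, rel] using hAB⟩
        · simp at hA1
      · have hAc := (exists_cut A (hn.sublist (List.sublist_append_left _ _)) (by omega)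
          (fun b => (hav b).sublist (List.sublist_append_left _ _))).resolve_left hc
        exact ⟨.pair a b, A, B, rfl, ha, hb, by rwa [ha.cut.2 hAc]⟩
    · refine ⟨.pair a b, A, B, rfl, ha, hb, ?_⟩
      rwa [show a.skew = false by rw [← Bool.not_eq_true, ha.cut]; exact hc]

theorem not_cons_pair {t a b : Tree} {l : List ℕ} (h : Realizes (.cons t) l)
    (h' : Realizes (.pair a b) l) : False := by
  have hs : (Tree.cons t).skew = false := rfl
  obtain ⟨A, B, rfl, ha, hb, hAB⟩ := h'
  have hcut : Cut a.skew (A ++ B) := ⟨A, B, ha.ne_nil, hb.ne_nil, rfl, hAB⟩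
  cases hsk : a.skew with
  | false => rw [hsk] at hcut; exact absurd hcut (by rw [← h.cut]; simp [hs])
  | true =>
    -- `A` has a descending cut, so its first entry exceeds a later one
    obtain ⟨C, E, hC, hE, rfl, hCE⟩ := ha.cut.1 hsk
    obtain ⟨x, l', he, -, hx⟩ := h
    obtain ⟨y, C, rfl⟩ := List.exists_cons_of_ne_nil hC
    obtain ⟨z, hz⟩ := List.exists_mem_of_ne_nil E hE
    simp only [List.cons_append, List.cons.injEq] at he
    obtain ⟨rfl, rfl⟩ := he
    have h1 := hx z (by simp [hz])
    have h2 := hCE y (by simp) z hz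
    simp [rel] at h2; omega

theorem realizes_unique {t t' : Tree} {l : List ℕ} (h : Realizes t l) (h' : Realizes t' l) :
    t = t' := by
  induction t generalizing t' l with
  | leaf =>
    have h1 := h.length
    have h2 := h'.length
    cases t' with
    | leaf => rfl
    | cons t => have := t.size_pos; simp [Tree.size] at *; omega
    | pair a b => have := a.size_pos; have := b.size_pos; simp [Tree.size] at *; omega
  | cons t ih =>
    cases t' with
    | leaf =>
      have h1 := h.length
      have h2 := h'.length
      have := t.size_pos; simp [Tree.size] at *; omega
    | cons t' =>
      obtain ⟨x, l, rfl, h, -⟩ := h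
      obtain ⟨x', l', he, h', -⟩ := h'
      simp only [List.cons.injEq] at he
      obtain ⟨rfl, rfl⟩ := he
      rw [ih h h']
    | pair a b => exact (not_cons_pair h h').elim
  | pair a b iha ihb =>
    cases t' with
    | leaf =>
      have h1 := h.length
      have h2 := h'.length
      have := a.size_pos; have := b.size_pos; simp [Tree.size] at *; omega
    | cons t => exact (not_cons_pair h' h).elim
    | pair a' b' =>
      have hsk : a.skew = a'.skew := by
        have := h.cut.trans h'.cut.symm
        cases ha : a.skew <;> cases ha' : a'.skew <;> simp [Tree.skew, ha, ha'] at *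
      obtain ⟨A, B, rfl, ha, hb, hAB⟩ := h
      obtain ⟨A', B', he, ha', hb', hAB'⟩ := h'
      have hc := ha.not_cut
      rw [hsk] at hAB hc
      obtain ⟨rfl, rfl⟩ := first_cut_unique ha.ne_nil ha'.ne_nil he hAB hAB' hc ha'.not_cut
      rw [iha ha ha', ihb hb hb']

/-! ### The standard realization -/

/-- The realization of a tree whose entries are `k, …, k + size - 1`. -/
def stdList : Tree → ℕ → List ℕ
  | .leaf, k => [k]
  | .cons t, k => k :: stdList t (k + 1)
  | .pair a b, k =>
    if a.skew then stdList a k ++ stdList b (k + a.size) else stdList a (k + b.size) ++ stdList b k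

theorem stdList_perm (t : Tree) (k : ℕ) : (stdList t k).Perm (List.range' k t.size) := by
  induction t generalizing k with
  | leaf => simp [stdList, Tree.size]
  | cons t ih => simpa [stdList, Tree.size, List.range'_succ] using ih _
  | pair a b iha ihb =>
    rw [stdList, Tree.size]
    split_ifs
    · rw [← List.range'_append_1]
      exact (iha _).append (ihb _)
    · rw [add_comm a.size, ← List.range'_append_1]
      exact ((iha _).append (ihb _)).trans List.perm_append_comm

theorem mem_stdList {t : Tree} {k x : ℕ} : x ∈ stdList t k ↔ k ≤ x ∧ x < k + t.size := by
  rw [(stdList_perm t k).mem_iff, List.mem_range'_1]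

theorem stdList_realizes (t : Tree) (k : ℕ) : Realizes t (stdList t k) := by
  induction t generalizing k with
  | leaf => exact ⟨k, rfl⟩
  | cons t ih => exact ⟨k, _, rfl, ih _, fun y hy => by rw [mem_stdList] at hy; omega⟩
  | pair a b iha ihb =>
    rw [stdList]
    split_ifs with h
    · refine ⟨_, _, rfl, iha _, ihb _, fun x hx y hy => ?_⟩
      rw [mem_stdList] at hx hy
      simp [rel, h]; omega
    · refine ⟨_, _, rfl, iha _, ihb _, fun x hx y hy => ?_⟩
      rw [mem_stdList] at hx hy
      simp [rel, h]; omega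

theorem split_range' {A B : List ℕ} {k m n : ℕ} (h : (A ++ B).Perm (List.range' k (m + n)))
    (hA : A.length = m) (hAB : ∀ x ∈ A, ∀ y ∈ B, x < y) :
    A.Perm (List.range' k m) ∧ B.Perm (List.range' (k + m) n) := by
  have hpA := List.mergeSort_perm A (· ≤ ·)
  have hpB := List.mergeSort_perm B (· ≤ ·)
  have he : A.mergeSort (· ≤ ·) ++ B.mergeSort (· ≤ ·) = List.range' k (m + n) := by
    refine List.Perm.eq_of_pairwise (le := (· ≤ ·)) (fun a b _ _ => le_antisymm) ?_ ?_
      ((hpA.append hpB).trans h)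
    · rw [List.pairwise_append]
      refine ⟨List.pairwise_mergeSort' _ _, List.pairwise_mergeSort' _ _, fun x hx y hy => ?_⟩
      exact (hAB x (hpA.mem_iff.1 hx) y (hpB.mem_iff.1 hy)).le
    · exact List.pairwise_le_range'
  rw [← List.range'_append_1] at he
  obtain ⟨h1, h2⟩ := List.append_inj he (by simp [hA])
  exact ⟨h1 ▸ hpA.symm, h2 ▸ hpB.symm⟩

/-- A tree has only one realization with entries `k, …, k + size - 1`. -/
theorem eq_stdList {t : Tree} {l : List ℕ} {k : ℕ} (h : Realizes t l)
    (hp : l.Perm (List.range' k t.size)) : l = stdList t k := by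
  induction t generalizing l k with
  | leaf =>
    obtain ⟨x, rfl⟩ := h
    simpa [stdList, Tree.size] using hp
  | cons t ih =>
    obtain ⟨x, l, rfl, h, hx⟩ := h
    rw [Tree.size, add_comm] at hp
    obtain ⟨h1, h2⟩ := split_range' (A := [x]) (m := 1) hp rfl (by simpa using hx)
    simp at h1
    rw [stdList, ← ih h h2, h1]
  | pair a b iha ihb =>
    obtain ⟨A, B, rfl, ha, hb, hAB⟩ := h
    rw [Tree.size] at hp
    rw [stdList]
    split_ifs with hs
    · obtain ⟨h1, h2⟩ := split_range' hp ha.length (by simpa [Below, hs, rel] using hAB)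
      rw [← iha ha h1, ← ihb hb h2]
    · rw [add_comm] at hp
      obtain ⟨h1, h2⟩ := split_range' (List.perm_append_comm.trans hp) hb.length
        (fun x hx y hy => by simpa [hs, rel] using hAB y hy x hx)
      rw [← iha ha h2, ← ihb hb h1]

/-! ### Initial ascending run of a list -/

/-- Length of the initial ascending run of a list. -/
def runLen : List ℕ → ℕ
  | [] => 0
  | [_] => 1
  | x :: y :: l => if x < y then runLen (y :: l) + 1 else 1

theorem runLen_cons_of_lt {x : ℕ} {l : List ℕ} (h : ∀ y ∈ l, x < y) :
    runLen (x :: l) = runLen l + 1 := by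
  rcases l with _ | ⟨y, l⟩
  · rfl
  · rw [runLen, if_pos (h y (by simp))]

theorem runLen_append_of_gt {A B : List ℕ} (hA : A ≠ []) (h : Below false A B) :
    runLen (A ++ B) = runLen A := by
  induction A with
  | nil => exact absurd rfl hA
  | cons x A ih =>
    rcases A with _ | ⟨y, A⟩
    · rcases B with _ | ⟨z, B⟩
      · rfl
      · have : z < x := by simpa [rel] using h x (by simp) z (by simp)
        simp [runLen, this.le]
    · have := ih (by simp) (fun a ha b hb => h a (by simp at ha ⊢; tauto) b hb)
      simp only [List.cons_append, runLen] at *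
      rw [this]

theorem runLen_append_of_not_sorted {A B : List ℕ} (h : ¬ A.IsChain (· < ·)) :
    runLen (A ++ B) = runLen A := by
  induction A with
  | nil => simp at h
  | cons x A ih =>
    rcases A with _ | ⟨y, A⟩
    · simp at h
    · simp only [List.cons_append, runLen] at *
      split_ifs with hxy
      · rw [ih (by simpa [hxy] using h)]
      · rfl

theorem Realizes.runLen {t : Tree} {l : List ℕ} (h : Realizes t l) : runLen l = t.stat := by
  induction t generalizing l with
  | leaf => obtain ⟨x, rfl⟩ := h; rfl
  | cons t ih =>
    obtain ⟨x, l, rfl, h, hx⟩ := h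
    rw [runLen_cons_of_lt hx, ih h, Tree.stat]
  | pair a b iha ihb =>
    obtain ⟨A, B, rfl, ha, hb, hAB⟩ := h
    rw [Tree.stat, ← iha ha]
    cases hs : a.skew
    · exact runLen_append_of_gt ha.ne_nil (hs ▸ hAB)
    · apply runLen_append_of_not_sorted
      obtain ⟨C, E, hC, hE, rfl, hCE⟩ := ha.cut.1 hs
      rw [List.isChain_iff_pairwise, List.pairwise_append]
      rintro ⟨-, -, hlt⟩
      have h1 := hlt _ (List.head_mem hC) _ (List.head_mem hE)
      have h2 := hCE _ (List.head_mem hC) _ (List.head_mem hE)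
      simp [rel] at h2; omega

theorem runLen_le (l : List ℕ) : runLen l ≤ l.length := by
  induction l with
  | nil => simp [SepSchr.runLen]
  | cons x l ih =>
    rcases l with _ | ⟨y, l⟩
    · simp [SepSchr.runLen]
    · simp only [SepSchr.runLen, List.length_cons] at *
      split_ifs <;> omega

theorem isChain_take_iff (l : List ℕ) (m : ℕ) (hm : m ≤ l.length) :
    (l.take m).IsChain (· < ·) ↔ m ≤ runLen l := by
  induction l generalizing m with
  | nil => simp at hm; simp [hm]
  | cons x l ih =>
    rcases m with _ | m
    · simp
    rcases l with _ | ⟨y, l⟩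
    · simp at hm; simp [hm, SepSchr.runLen]
    rcases m with _ | m
    · simp [SepSchr.runLen]; split_ifs <;> omega
    have := ih (m + 1) (by simp at hm ⊢; omega)
    simp only [List.take_succ_cons, List.isChain_cons_cons, SepSchr.runLen] at *
    rw [this]
    split_ifs with h
    · simp [h]
    · simp [h]

/-! ### Permutations as lists -/

/-- One-line notation of a permutation, with values starting at `0`. -/
def toList {n : ℕ} (π : Equiv.Perm (Fin n)) : List ℕ := List.ofFn fun i => (π i : ℕ)

theorem iar_eq {n : ℕ} (π : Equiv.Perm (Fin n)) : iar π = runLen (toList π) := by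
  have hP : ∀ m ≤ n, (∀ i j : Fin n, (i : ℕ) < (j : ℕ) → (j : ℕ) < m → π i < π j) ↔
      m ≤ runLen (toList π) := by
    intro m hm
    rw [← isChain_take_iff _ _ (by simpa [toList] using hm), List.isChain_iff_pairwise,
      List.pairwise_iff_getElem]
    simp only [toList, List.length_take, List.length_ofFn, List.getElem_take, List.getElem_ofFn]
    constructor
    · intro h i j hi hj hij
      exact h _ _ hij (by simp at hj ⊢; omega)
    · intro h i j hij hj
      exact h i j (by omega) (by omega) hij
  have hle : runLen (toList π) ≤ n := by simpa [toList] using runLen_le (toList π)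
  rw [iar, Nat.findGreatest_eq_iff]
  refine ⟨hle, fun _ => (hP _ hle).2 le_rfl, fun m h1 h2 => ?_⟩
  rw [hP m h2]; omega

theorem sublist_iff {n : ℕ} (π : Equiv.Perm (Fin n)) (x y z t : ℕ) :
    [x, y, z, t].Sublist (toList π) ↔ ∃ f : Fin 4 ↪o Fin n,
      (π (f 0) : ℕ) = x ∧ (π (f 1) : ℕ) = y ∧ (π (f 2) : ℕ) = z ∧ (π (f 3) : ℕ) = t := by
  rw [toList, List.ofFn_eq_map, List.sublist_map_iff]
  constructor
  · rintro ⟨l, hl, he⟩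
    have hp := (List.pairwise_lt_finRange n).sublist hl
    rcases l with _ | ⟨i, _ | ⟨j, _ | ⟨k, _ | ⟨m, _ | ⟨q, l⟩⟩⟩⟩⟩ <;> simp at he
    simp at hp
    refine ⟨OrderEmbedding.ofStrictMono ![i, j, k, m] ?_, ?_⟩
    · simp [hp]
    · simp [he]
  · rintro ⟨f, rfl, rfl, rfl, rfl⟩
    refine ⟨[f 0, f 1, f 2, f 3], ?_, rfl⟩
    have hp : [f 0, f 1, f 2, f 3].Pairwise (· < ·) := by
      simp
    refine List.sublist_of_subperm_of_pairwise (r := (· ≤ ·)) ?_ (hp.imp le_of_lt)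
      ((List.pairwise_lt_finRange n).imp le_of_lt)
    exact (show [f 0, f 1, f 2, f 3].Nodup from hp.imp ne_of_lt).subperm fun i _ => List.mem_finRange i

theorem separable_iff {n : ℕ} (π : Equiv.Perm (Fin n)) :
    Separable π ↔ ∀ b, Av b (toList π) := by
  have h1 : ContainsPat π pattern2413 ↔ ¬ Av true (toList π) := by
    simp only [Av, sublist_iff, ContainsPat]
    push Not
    constructor
    · rintro ⟨f, hf⟩
      refine ⟨_, _, _, _, ?_, ?_, ?_, f, rfl, rfl, rfl, rfl⟩ <;> simp only [rel, if_true]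
      · exact (hf 2 0).1 (by decide)
      · exact (hf 0 3).1 (by decide)
      · exact (hf 3 1).1 (by decide)
    · rintro ⟨x, y, z, t, hxy, hyz, hzt, f, rfl, rfl, rfl, rfl⟩
      refine ⟨f, fun a b => ?_⟩
      simp only [rel, if_true, Fin.val_fin_lt] at hxy hyz hzt
      have := hxy.trans hyz
      have := hyz.trans hzt
      have := hxy.trans (hyz.trans hzt)
      fin_cases a <;> fin_cases b <;> simp [pattern2413, *, le_of_lt]
  have h2 : ContainsPat π pattern3142 ↔ ¬ Av false (toList π) := by
    simp only [Av, sublist_iff, ContainsPat]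
    push Not
    constructor
    · rintro ⟨f, hf⟩
      refine ⟨_, _, _, _, ?_, ?_, ?_, f, rfl, rfl, rfl, rfl⟩ <;>
        simp only [rel, Bool.false_eq_true, if_false]
      · exact (hf 0 2).1 (by decide)
      · exact (hf 3 0).1 (by decide)
      · exact (hf 1 3).1 (by decide)
    · rintro ⟨x, y, z, t, hxy, hyz, hzt, f, rfl, rfl, rfl, rfl⟩
      refine ⟨f, fun a b => ?_⟩
      simp only [rel, Bool.false_eq_true, if_false, Fin.val_fin_lt] at hxy hyz hzt
      have := hyz.trans hxy
      have := hzt.trans hyz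
      have := hzt.trans (hyz.trans hxy)
      fin_cases a <;> fin_cases b <;> simp [pattern3142, *, le_of_lt]
  rw [Separable, h1, h2]
  simp [and_comm]

theorem toList_injective {n : ℕ} : Function.Injective (toList (n := n)) := by
  intro π σ h
  ext i
  exact congrFun (List.ofFn_injective h) i

theorem toList_nodup {n : ℕ} (π : Equiv.Perm (Fin n)) : (toList π).Nodup :=
  List.nodup_ofFn.2 (Fin.val_injective.comp π.injective)

theorem toList_perm {n : ℕ} (π : Equiv.Perm (Fin n)) : (toList π).Perm (List.range' 0 n) := by
  rw [List.perm_ext_iff_of_nodup (toList_nodup π) List.nodup_range']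
  intro a
  simp only [toList, List.mem_ofFn, List.mem_range'_1]
  constructor
  · rintro ⟨i, rfl⟩
    have := (π i).2
    omega
  · intro h
    exact ⟨π.symm ⟨a, by omega⟩, by simp⟩

theorem exists_toList {n : ℕ} {l : List ℕ} (h : l.Perm (List.range' 0 n)) :
    ∃ π : Equiv.Perm (Fin n), toList π = l := by
  have hlen : l.length = n := by simpa using h.length_eq
  subst hlen
  have hn : l.Nodup := h.nodup_iff.2 List.nodup_range'
  have hlt : ∀ i : Fin l.length, l[i] < l.length := fun i => by
    have := h.mem_iff.1 (List.getElem_mem i.2)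
    rw [List.mem_range'_1] at this
    simpa using this.2
  have hinj : Function.Injective (fun i : Fin l.length => (⟨l[i], hlt i⟩ : Fin l.length)) := by
    intro i j hij
    have : l[(i : ℕ)] = l[(j : ℕ)] := by simpa using hij
    exact Fin.ext ((hn.getElem_inj_iff).1 this)
  refine ⟨Equiv.ofBijective _ (Finite.injective_iff_bijective.1 hinj), ?_⟩
  simp [toList]

theorem p_eq_trees (n k : ℕ) (hn : 1 ≤ n) :
    p n k = Nat.card {t : Tree // t.size = n ∧ t.stat = k} := by
  have hex : ∀ π : Equiv.Perm (Fin n), Separable π → ∃ t, Realizes t (toList π) := fun π hπ =>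
    exists_realizes _ (by rw [← List.length_pos_iff, toList, List.length_ofFn]; exact hn) (toList_nodup π)
      ((separable_iff π).1 hπ)
  choose f hf using hex
  have hsize : ∀ π hπ, (f π hπ).size = n := fun π hπ => by
    rw [← (hf π hπ).length]; simp [toList]
  refine Nat.card_congr (Equiv.ofBijective (fun π => ⟨f π.1 π.2.1, hsize _ _, ?_⟩) ⟨?_, ?_⟩)
  · rw [← (hf _ _).runLen, ← iar_eq, π.2.2]
  · rintro ⟨π, h1, h2⟩ ⟨σ, h3, h4⟩ h
    have h : f π h1 = f σ h3 := congrArg Subtype.val h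
    apply Subtype.ext
    apply toList_injective
    have hπ := eq_stdList (k := 0) (hf π h1) (by rw [hsize]; exact toList_perm π)
    have hσ := eq_stdList (k := 0) (hf σ h3) (by rw [hsize]; exact toList_perm σ)
    rw [hπ, hσ, h]
  · rintro ⟨t, rfl, rfl⟩
    obtain ⟨π, hπ⟩ := exists_toList (stdList_perm t 0)
    have ht : Realizes t (toList π) := hπ ▸ stdList_realizes t 0
    have hs : Separable π := (separable_iff π).2 ht.av
    exact ⟨⟨π, hs, by rw [iar_eq, ht.runLen]⟩, Subtype.ext (realizes_unique (hf π hs) ht)⟩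

end SepSchr

/-- For all `1 ≤ k ≤ n`, the number of separable permutations of `[n]` whose
initial ascending run has length `k` equals the number of Schröder paths of
semilength `n-1` with exactly `k-1` hills: `p(n,k) = r(n-1,k-1)`. -/
theorem stmt9 (n k : ℕ) (hk : 1 ≤ k) (hkn : k ≤ n) :
    p n k = r (n - 1) (k - 1) := by
  obtain ⟨n, rfl⟩ := Nat.exists_eq_add_of_le' (hk.trans hkn)
  obtain ⟨k, rfl⟩ := Nat.exists_eq_add_of_le' hk
  rw [SepSchr.p_eq_trees _ _ (by omega), Nat.add_sub_cancel, Nat.add_sub_cancel, SepSchr.r_eq_trees]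
end

section
/- For all integers 1 ≤ k ≤ n, the cardinality of DT_{n,k} equals p(n,k); that is, the number of di-sk trees with n−1 nodes whose in-order label sequence begins with k−1 copies of ⊕ followed (when k ≤ n−1) by ⊖ equals the number of separable permutations of [n] with iar equal to k. -/
/-! The standard correspondence between di-sk trees and separable permutations carries the
in-order label sequence to the ascent/descent word, and this proves the equality.

A tree `t` with `m` nodes has `m + 1` leaves, the gaps of its in-order traversal. It
*represents* a sequence `f 0, …, f m` (`Represents t f`) if at every node labeled
`⊕` all values on the leaves of the left part are below all values on the leaves of the right
part, and above them at every node labeled `⊖`.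

* Every tree represents some permutation (`exists_perm`), and only one, since the tree
  determines the relative order of the values (`Represents.lt_transfer`).
* A represented sequence avoids `2413` and `3142` (`Represents.avoid`).
* A sequence avoiding both patterns splits as a direct or skew sum (`exists_split`). Always
  splitting at the last possible place produces a tree in which no node has the label of its
  right child (`exists_tree`), and that condition forces this choice (`Represents.unique`).
* The `i`-th in-order label is `⊕` exactly when `f i < f (i + 1)` (`Represents.labels_get`), so the
  length of the initial run of `⊕` is one less than the initial ascending run.
-/

/-- A plane binary tree with nodes labeled by `Bool`
(`true` for `⊕` and `false` for `⊖`); `nil` is the empty tree,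
and each node has an optional left and right child (given by `nil` subtrees). -/
inductive DTree : Type
  | nil : DTree
  | node : Bool → DTree → DTree → DTree
  deriving DecidableEq

/-- The in-order label sequence of a labeled binary tree. -/
def DTree.labels : DTree → List Bool
  | .nil => []
  | .node b l r => l.labels ++ b :: r.labels

/-- The right-chain condition: no node has the same label as its right child. -/
def DTree.RightOk : DTree → Prop
  | .nil => True
  | .node b l r =>
      l.RightOk ∧ r.RightOk ∧
      (match r with
       | .nil => True
       | .node b' _ _ => b ≠ b')

/-- `IsDiSk t` : `t` is a di-sk tree. -/
def IsDiSk (t : DTree) : Prop := t.RightOk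

/-- Membership in `DT_{n,k}` : a di-sk tree with `n-1` nodes whose in-order label
sequence starts with `k-1` copies of `⊕` followed (when `k ≤ n-1`) by a `⊖`. -/
def MemDT (n k : ℕ) (t : DTree) : Prop :=
  IsDiSk t ∧ t.labels.length = n - 1 ∧
  (∀ i : ℕ, i < k - 1 → t.labels[i]? = some true) ∧
  (k ≤ n - 1 → t.labels[k-1]? = some false)

/-- The cardinality of `DT_{n,k}`. -/
noncomputable def DTcard (n k : ℕ) : ℕ := Nat.card {t : DTree // MemDT n k t}

/-- `x` is below `y` if `b` is `⊕`, and above `y` if `b` is `⊖`. -/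
def Below (b : Bool) (x y : ℕ) : Prop := if b = true then x < y else y < x

/-- `Represents t f`: with `m` the number of nodes of `t`, the sequence `f 0, …, f m` is
decomposed by `t` into direct sums (at `⊕`) and skew sums (at `⊖`). -/
def Represents : DTree → (ℕ → ℕ) → Prop
  | .nil, _ => True
  | .node b l r, f =>
      Represents l f ∧ Represents r (fun i => f (l.labels.length + 1 + i)) ∧
      ∀ i ≤ l.labels.length, ∀ j ≤ r.labels.length,
        Below b (f i) (f (l.labels.length + 1 + j))

/-- `f 0, …, f m` avoids `2413` and `3142`: the forbidden configuration is `3142` for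
`b = ⊕` and `2413` for `b = ⊖`. -/
def Avoid (m : ℕ) (f : ℕ → ℕ) : Prop :=
  ∀ b : Bool, ∀ i j k l : ℕ, i < j → j < k → k < l → l ≤ m →
    ¬ (Below b (f j) (f l) ∧ Below b (f l) (f i) ∧ Below b (f i) (f k))

/-- `f 0, …, f m` splits with label `b` between the positions `c` and `c + 1`. -/
def SplitAt (b : Bool) (m c : ℕ) (f : ℕ → ℕ) : Prop :=
  c < m ∧ ∀ i ≤ c, ∀ j ≤ m, c < j → Below b (f i) (f j)

lemma labels_length_node (b : Bool) (l r : DTree) :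
    (DTree.node b l r).labels.length = l.labels.length + r.labels.length + 1 := by
  simp [DTree.labels]; omega

lemma Below.asymm {b : Bool} {x y : ℕ} (h : Below b x y) : ¬ Below b y x := by
  cases b <;> simp [Below] at * <;> omega

lemma Below.trans {b : Bool} {x y z : ℕ} (h : Below b x y) (h' : Below b y z) :
    Below b x z := by
  cases b <;> simp [Below] at * <;> omega

lemma below_of_not {b : Bool} {x y : ℕ} (hne : x ≠ y) (h : ¬ Below b x y) : Below b y x := by
  cases b <;> simp [Below] at * <;> omega

lemma below_not {b : Bool} {x y : ℕ} : Below (!b) x y ↔ Below b y x := by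
  cases b <;> simp [Below]

/-- Two labels that compare the same pair the same way agree. -/
lemma Below.label_eq {b b' : Bool} {x y : ℕ} (h : Below b x y) (h' : Below b' x y) : b = b' := by
  cases b <;> cases b' <;> simp [Below] at * <;> omega

lemma Represents.splitAt {b : Bool} {l r : DTree} {f : ℕ → ℕ} (h : Represents (.node b l r) f) :
    SplitAt b (DTree.node b l r).labels.length l.labels.length f := by
  rw [labels_length_node]
  refine ⟨by omega, fun i hi j hj hc => ?_⟩
  have := h.2.2 i hi (j - (l.labels.length + 1)) (by omega)
  rwa [show l.labels.length + 1 + (j - (l.labels.length + 1)) = j by omega] at this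

/-! ### Trees determine relative order, avoidance and labels -/

lemma Represents.congr {t : DTree} : ∀ {f g : ℕ → ℕ}, Represents t f →
    (∀ i ≤ t.labels.length, ∀ j ≤ t.labels.length, f i < f j → g i < g j) → Represents t g := by
  induction t with
  | nil => intros; trivial
  | node b l r ihl ihr =>
    intro f g h hfg
    rw [labels_length_node] at hfg
    refine ⟨ihl h.1 fun i hi j hj => hfg i (by omega) j (by omega),
      ihr h.2.1 fun i hi j hj => hfg _ (by omega) _ (by omega), fun i hi j hj => ?_⟩
    have h1 := h.2.2 i hi j hj
    cases b
    · exact hfg _ (by omega) _ (by omega) h1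
    · exact hfg _ (by omega) _ (by omega) h1

/-- The relative order of the values is determined by the tree. -/
lemma Represents.lt_transfer {t : DTree} : ∀ {f g : ℕ → ℕ}, Represents t f → Represents t g →
    ∀ i ≤ t.labels.length, ∀ j ≤ t.labels.length, f i < f j → g i < g j := by
  induction t with
  | nil =>
    intro f g _ _ i hi j hj h
    simp [DTree.labels] at hi hj
    subst hi hj
    omega
  | node b l r ihl ihr =>
    intro f g hf hg i hi j hj h
    obtain ⟨-, sf⟩ := hf.splitAt
    obtain ⟨-, sg⟩ := hg.splitAt
    by_cases hil : i ≤ l.labels.length <;> by_cases hjl : j ≤ l.labels.length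
    · exact ihl hf.1 hg.1 i hil j hjl h
    · have h1 := sf i hil j hj (by omega)
      have h2 := sg i hil j hj (by omega)
      cases b <;> simp [Below] at h1 h2 <;> omega
    · have h1 := sf j hjl i hi (by omega)
      have h2 := sg j hjl i hi (by omega)
      cases b <;> simp [Below] at h1 h2 <;> omega
    · rw [labels_length_node] at hi hj
      have := ihr hf.2.1 hg.2.1 (i - (l.labels.length + 1)) (by omega)
        (j - (l.labels.length + 1)) (by omega)
      simp only [show l.labels.length + 1 + (i - (l.labels.length + 1)) = i by omega,
        show l.labels.length + 1 + (j - (l.labels.length + 1)) = j by omega] at this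
      exact this h

lemma Represents.ne {t : DTree} : ∀ {f : ℕ → ℕ}, Represents t f →
    ∀ i j, i < j → j ≤ t.labels.length → f i ≠ f j := by
  induction t with
  | nil => intro f _ i j hij hj; simp [DTree.labels] at hj; omega
  | node b l r ihl ihr =>
    intro f hf i j hij hj
    by_cases hjl : j ≤ l.labels.length
    · exact ihl hf.1 i j hij hjl
    by_cases hil : i ≤ l.labels.length
    · have h1 := hf.splitAt.2 i hil j hj (by omega)
      cases b <;> simp [Below] at h1 <;> omega
    · rw [labels_length_node] at hj
      have := ihr hf.2.1 (i - (l.labels.length + 1)) (j - (l.labels.length + 1))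
        (by omega) (by omega)
      simpa only [show l.labels.length + 1 + (i - (l.labels.length + 1)) = i by omega,
        show l.labels.length + 1 + (j - (l.labels.length + 1)) = j by omega] using this

lemma Represents.avoid {t : DTree} : ∀ {f : ℕ → ℕ}, Represents t f → Avoid t.labels.length f := by
  induction t with
  | nil => intro f _ b i j k l h1 h2 h3 h4; simp [DTree.labels] at h4; omega
  | node b' L R ihl ihr =>
    rintro f hf b i j k l hij hjk hkl hl ⟨h1, h2, h3⟩
    have s := hf.splitAt.2
    by_cases hlL : l ≤ L.labels.length
    · exact ihl hf.1 b i j k l hij hjk hkl hlL ⟨h1, h2, h3⟩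
    by_cases hiL : i ≤ L.labels.length
    · -- The pair `(i, l)` gives the node the label `!b`, and one of the pairs `(j, l)`, `(i, k)`
      -- also lies across the node and gives it the label `b`.
      have e := (s i hiL l hl (by omega)).label_eq (below_not.2 h2)
      by_cases hjL : j ≤ L.labels.length
      · have e' := (s j hjL l hl (by omega)).label_eq h1
        simp [e] at e'
      · have e' := (s i hiL k (by omega) (by omega)).label_eq h3
        simp [e] at e'
    · rw [labels_length_node] at hl
      refine ihr hf.2.1 b (i - (L.labels.length + 1)) (j - (L.labels.length + 1))
        (k - (L.labels.length + 1)) (l - (L.labels.length + 1)) (by omega) (by omega) (by omega)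
        (by omega) ?_
      simp only [show L.labels.length + 1 + (i - (L.labels.length + 1)) = i by omega,
        show L.labels.length + 1 + (j - (L.labels.length + 1)) = j by omega,
        show L.labels.length + 1 + (k - (L.labels.length + 1)) = k by omega,
        show L.labels.length + 1 + (l - (L.labels.length + 1)) = l by omega]
      exact ⟨h1, h2, h3⟩

lemma Represents.labels_get {t : DTree} : ∀ {f : ℕ → ℕ}, Represents t f →
    ∀ i < t.labels.length, t.labels[i]? = some (decide (f i < f (i + 1))) := by
  induction t with
  | nil => intro f _ i hi; simp [DTree.labels] at hi
  | node b l r ihl ihr =>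
    intro f hf i hi
    rw [DTree.labels]
    rcases lt_trichotomy i l.labels.length with h | h | h
    · rw [List.getElem?_append_left h, ihl hf.1 i h]
    · subst h
      have := hf.2.2 l.labels.length le_rfl 0 (by omega)
      rw [List.getElem?_append_right le_rfl]
      cases b <;> simp [Below] at this ⊢ <;> omega
    · obtain ⟨d, rfl⟩ : ∃ d, i = l.labels.length + 1 + d := ⟨i - (l.labels.length + 1), by omega⟩
      rw [labels_length_node] at hi
      rw [List.getElem?_append_right (by omega),
        show l.labels.length + 1 + d - l.labels.length = d + 1 by omega, List.getElem?_cons_succ,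
        ihr hf.2.1 d (by omega)]
      rfl

/-! ### Existence and uniqueness of the di-sk tree of a sequence -/

lemma SplitAt.unique_label {b b' : Bool} {m c c' : ℕ} {f : ℕ → ℕ} (h : SplitAt b m c f)
    (h' : SplitAt b' m c' f) : b = b' :=
  (h.2 0 (by omega) m le_rfl h.1).label_eq (h'.2 0 (by omega) m le_rfl h'.1)

/-- In a di-sk tree, the root is the last place where its sequence splits with the label of
the root: a later such split would be one of the sequence of the right subtree, whose root has the
other label. -/
lemma Represents.split_le {b : Bool} {l r : DTree} {f : ℕ → ℕ} (hf : Represents (.node b l r) f)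
    (ok : (DTree.node b l r).RightOk) {c : ℕ}
    (hc : SplitAt b (DTree.node b l r).labels.length c f) : c ≤ l.labels.length := by
  by_contra! hlt
  have hr : SplitAt b r.labels.length (c - (l.labels.length + 1))
      (fun i => f (l.labels.length + 1 + i)) := by
    rw [labels_length_node] at hc
    obtain ⟨h1, h2⟩ := hc
    exact ⟨by omega, fun i hi j hj hcj => h2 _ (by omega) _ (by omega) (by omega)⟩
  cases r with
  | nil => simp [SplitAt, DTree.labels] at hr
  | node b' l' r' => exact ok.2.2 (hr.unique_label hf.2.1.splitAt)

lemma Represents.unique {t : DTree} : ∀ {t' : DTree} {f : ℕ → ℕ}, Represents t f →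
    Represents t' f → t.RightOk → t'.RightOk → t.labels.length = t'.labels.length → t = t' := by
  induction t with
  | nil =>
    intro t' f _ _ _ _ h
    cases t' with
    | nil => rfl
    | node b l r => simp [DTree.labels] at h
  | node b l r ihl ihr =>
    intro t' f hf hf' ok ok' h
    cases t' with
    | nil => simp [DTree.labels] at h
    | node b' l' r' =>
      have s := hf.splitAt
      have s' := hf'.splitAt
      rw [h] at s
      obtain rfl := s.unique_label s'
      have e : l.labels.length = l'.labels.length :=
        le_antisymm (hf'.split_le ok' s) (hf.split_le ok (h ▸ s'))
      have e' : r.labels.length = r'.labels.length := by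
        rw [labels_length_node, labels_length_node] at h; omega
      have h2 := hf'.2.1
      rw [← e] at h2
      rw [ihl hf.1 hf'.1 ok.1 ok'.1 e, ihr hf.2.1 h2 ok.2.1 ok'.2.1 e']

/-- A sequence of at least two distinct values avoiding `2413` and `3142` is a direct or a skew
sum. By induction all but the last value split, say with label `b`; either this extends to the
last value `x`, or `x` splits off with label `!b`, or the first part consists of values below
`x` (in the sense of `b`) followed by values above it, which gives a split between these. -/
lemma exists_split (m : ℕ) (f : ℕ → ℕ) (hne : ∀ i j, i < j → j ≤ m → f i ≠ f j)
    (hav : Avoid m f) (hm : 1 ≤ m) : ∃ b c, SplitAt b m c f := by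
  induction m, hm using Nat.le_induction with
  | base =>
    have h01 := hne 0 1 (by omega) le_rfl
    rcases lt_or_gt_of_ne h01 with h | h
    · refine ⟨true, 0, by omega, fun i hi j hj hij => ?_⟩
      obtain rfl : i = 0 := by omega
      obtain rfl : j = 1 := by omega
      exact h
    · refine ⟨false, 0, by omega, fun i hi j hj hij => ?_⟩
      obtain rfl : i = 0 := by omega
      obtain rfl : j = 1 := by omega
      exact h
  | succ m hm ih =>
    obtain ⟨b, c, hc, hs⟩ := ih (fun i j hij hj => hne i j hij (by omega))
      (fun b i j k l h1 h2 h3 h4 => hav b i j k l h1 h2 h3 (by omega))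
    by_cases hA : ∀ i ≤ c, Below b (f i) (f (m + 1))
    · refine ⟨b, c, by omega, fun i hi j hj hij => ?_⟩
      rcases Nat.lt_or_ge m j with h | h
      · obtain rfl : j = m + 1 := by omega
        exact hA i hi
      · exact hs i hi j h hij
    push Not at hA
    -- `d` is the first position whose value is above the last value.
    classical
    let P : ℕ → Prop := fun i => i ≤ c ∧ ¬ Below b (f i) (f (m + 1))
    have hP : ∃ i, P i := hA
    obtain ⟨d, hd, hmin⟩ : ∃ d, P d ∧ ∀ i < d, ¬ P i :=
      ⟨Nat.find hP, Nat.find_spec hP, fun i hi => Nat.find_min hP hi⟩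
    have hdx : Below b (f (m + 1)) (f d) :=
      below_of_not (hne d (m + 1) (by have := hd.1; omega) le_rfl) hd.2
    have hbefore : ∀ i < d, Below b (f i) (f (m + 1)) := fun i hi => by
      by_contra h
      exact hmin i hi ⟨by have := hd.1; omega, h⟩
    have hafter : ∀ i, d ≤ i → i ≤ m → Below b (f (m + 1)) (f i) := fun i hdi him => by
      by_cases hic : i ≤ c
      · rcases hdi.eq_or_lt with rfl | hlt
        · exact hdx
        · refine below_of_not (hne i (m + 1) (by omega) le_rfl) fun hi => ?_
          exact hav b d i m (m + 1) hlt (by omega) (by omega) le_rfl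
            ⟨hi, hdx, hs d hd.1 m le_rfl hc⟩
      · exact hdx.trans (hs d hd.1 i him (by omega))
    rcases Nat.eq_zero_or_pos d with rfl | hpos
    · refine ⟨!b, m, by omega, fun i hi j hj hij => ?_⟩
      obtain rfl : j = m + 1 := by omega
      exact below_not.2 (hafter i (by omega) hi)
    · have := hd.1
      refine ⟨b, d - 1, by omega, fun i hi j hj hij => ?_⟩
      have h1 := hbefore i (by omega)
      rcases Nat.lt_or_ge m j with h | h
      · obtain rfl : j = m + 1 := by omega
        exact h1
      · exact h1.trans (hafter j (by omega) h)

lemma exists_tree (m : ℕ) : ∀ f : ℕ → ℕ, (∀ i j, i < j → j ≤ m → f i ≠ f j) → Avoid m f →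
    ∃ t : DTree, t.labels.length = m ∧ t.RightOk ∧ Represents t f := by
  induction m using Nat.strong_induction_on with
  | _ m ih =>
    intro f hne hav
    rcases Nat.eq_zero_or_pos m with rfl | hm
    · exact ⟨.nil, rfl, trivial, trivial⟩
    obtain ⟨b, c₀, hc₀⟩ := exists_split m f hne hav hm
    -- Splitting at the last possible place makes the right part indecomposable with label `b`.
    classical
    obtain ⟨c, hc, hmax⟩ : ∃ c, SplitAt b m c f ∧ ∀ c', c < c' → ¬ SplitAt b m c' f := by
      refine ⟨Nat.findGreatest (fun c => SplitAt b m c f) m,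
        Nat.findGreatest_spec (P := fun c => SplitAt b m c f) hc₀.1.le hc₀, fun c' hlt h => ?_⟩
      exact Nat.findGreatest_is_greatest hlt h.1.le h
    have hcm := hc.1
    obtain ⟨l, hl, okl, repl⟩ := ih c hcm f (fun i j hij hj => hne i j hij (by omega))
      (fun b i j k l h1 h2 h3 h4 => hav b i j k l h1 h2 h3 (by omega))
    obtain ⟨r, hr, okr, repr⟩ := ih (m - c - 1) (by omega) (fun i => f (c + 1 + i))
      (fun i j hij hj => hne _ _ (by omega) (by omega))
      (fun b i j k l h1 h2 h3 h4 => hav b (c + 1 + i) (c + 1 + j) (c + 1 + k) (c + 1 + l)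
        (by omega) (by omega) (by omega) (by omega))
    refine ⟨.node b l r, by rw [labels_length_node]; omega, ⟨okl, okr, ?_⟩, repl, ?_, ?_⟩
    · cases r with
      | nil => trivial
      | node b' l' r' =>
        rintro rfl
        have s := repr.splitAt
        rw [hr] at s
        obtain ⟨s1, s2⟩ := s
        refine hmax (c + 1 + l'.labels.length) (by omega) ⟨by omega, fun i hi j hj hij => ?_⟩
        by_cases hic : i ≤ c
        · exact hc.2 i hic j hj (by omega)
        · have := s2 (i - (c + 1)) (by omega) (j - (c + 1)) (by omega) (by omega)
          simpa only [show c + 1 + (i - (c + 1)) = i by omega,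
            show c + 1 + (j - (c + 1)) = j by omega] using this
    · rw [hl]; exact repr
    · intro i hi j hj
      rw [hl] at hi ⊢
      exact hc.2 i hi _ (by omega) (by omega)

/-! ### The permutation of a tree -/

/-- The sequence on `0, …, m` obtained from a tree by taking direct sums at `⊕` and skew sums
at `⊖`; its values on `0, …, m` are again `0, …, m`. -/
def treeVal : DTree → ℕ → ℕ
  | .nil, _ => 0
  | .node b l r, i =>
      if i ≤ l.labels.length then
        (if b = true then 0 else r.labels.length + 1) + treeVal l i
      else
        (if b = true then l.labels.length + 1 else 0) + treeVal r (i - (l.labels.length + 1))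

lemma treeVal_le (t : DTree) : ∀ i ≤ t.labels.length, treeVal t i ≤ t.labels.length := by
  induction t with
  | nil => intro i _; simp [treeVal]
  | node b l r ihl ihr =>
    intro i hi
    rw [labels_length_node] at *
    rw [treeVal]
    by_cases h : i ≤ l.labels.length
    · have := ihl i h
      rw [if_pos h]
      split_ifs <;> omega
    · have := ihr (i - (l.labels.length + 1)) (by omega)
      rw [if_neg h]
      split_ifs <;> omega

lemma rep_treeVal (t : DTree) : Represents t (treeVal t) := by
  induction t with
  | nil => trivial
  | node b l r ihl ihr =>
    have hL : ∀ i ≤ l.labels.length, treeVal (.node b l r) i =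
        (if b = true then 0 else r.labels.length + 1) + treeVal l i := fun i hi => by
      rw [treeVal, if_pos hi]
    have hR : ∀ j, treeVal (.node b l r) (l.labels.length + 1 + j) =
        (if b = true then l.labels.length + 1 else 0) + treeVal r j := fun j => by
      rw [treeVal, if_neg (by omega), Nat.add_sub_cancel_left]
    refine ⟨ihl.congr fun i hi j hj h => ?_, ihr.congr fun i hi j hj h => ?_, fun i hi j hj => ?_⟩
    · rw [hL i hi, hL j hj]; omega
    · simp only [hR]; omega
    · rw [hL i hi, hR j]
      have h1 := treeVal_le l i hi
      have h2 := treeVal_le r j hj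
      cases b <;> simp [Below] <;> omega

/-- A permutation of `Fin n` as a sequence on `ℕ`, with junk value `0` from `n` on. -/
def seqOf {n : ℕ} (π : Equiv.Perm (Fin n)) (i : ℕ) : ℕ :=
  if h : i < n then (π ⟨i, h⟩ : ℕ) else 0

lemma seqOf_coe {n : ℕ} (π : Equiv.Perm (Fin n)) (i : Fin n) : seqOf π i = (π i : ℕ) := by
  simp [seqOf]

lemma seqOf_ne {n : ℕ} (π : Equiv.Perm (Fin n)) (i j : ℕ) (hij : i < j) (hj : j < n) :
    seqOf π i ≠ seqOf π j := by
  rw [seqOf, seqOf, dif_pos (hij.trans hj), dif_pos hj]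
  intro h
  have := π.injective (Fin.ext h)
  simp at this
  omega

lemma exists_perm (t : DTree) {n : ℕ} (h : t.labels.length + 1 = n) :
    ∃ π : Equiv.Perm (Fin n), Represents t (seqOf π) := by
  subst h
  let g : Fin (t.labels.length + 1) → Fin (t.labels.length + 1) :=
    fun i => ⟨treeVal t i, by have := treeVal_le t i (by omega); omega⟩
  have hg : Function.Injective g := by
    intro i j hij
    have hv : treeVal t i = treeVal t j := congrArg Fin.val hij
    rcases lt_trichotomy (i : ℕ) j with h | h | h
    · exact absurd hv ((rep_treeVal t).ne i j h (by omega))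
    · exact Fin.ext h
    · exact absurd hv.symm ((rep_treeVal t).ne j i h (by omega))
  refine ⟨Equiv.ofBijective g (Finite.injective_iff_bijective.1 hg),
    (rep_treeVal t).congr fun i hi j hj h => ?_⟩
  rw [seqOf, seqOf, dif_pos (by omega), dif_pos (by omega)]
  exact h

lemma perm_unique {t : DTree} {n : ℕ} (h : t.labels.length + 1 = n) {π σ : Equiv.Perm (Fin n)}
    (hπ : Represents t (seqOf π)) (hσ : Represents t (seqOf σ)) : π = σ := by
  have key : StrictMono (fun i => σ (π.symm i)) := by
    intro i j hij
    have := hπ.lt_transfer hσ (π.symm i) (by omega) (π.symm j) (by omega)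
    simp only [seqOf_coe, Equiv.apply_symm_apply] at this
    exact this hij
  have := (StrictMono.range_inj key strictMono_id).1 (by
    rw [Set.range_id]
    exact (π.symm.trans σ).surjective.range_eq)
  ext i
  have := congrFun this (π i)
  simp at this
  rw [this]

/-! ### Separability and the initial ascending run, read on sequences -/

/-- A pattern of length `4` occurs iff four increasing positions carry its relative order. -/
lemma containsPat_iff {n : ℕ} (π : Equiv.Perm (Fin n)) (σ : Equiv.Perm (Fin 4)) :
    ContainsPat π σ ↔ ∃ i j k l : Fin n, i < j ∧ j < k ∧ k < l ∧
      ∀ a b : Fin 4, σ a < σ b ↔ π (![i, j, k, l] a) < π (![i, j, k, l] b) := by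
  constructor
  · rintro ⟨f, hf⟩
    refine ⟨f 0, f 1, f 2, f 3, f.lt_iff_lt.2 (by decide), f.lt_iff_lt.2 (by decide),
      f.lt_iff_lt.2 (by decide), fun a b => ?_⟩
    have e : ![f 0, f 1, f 2, f 3] = f := by ext a; fin_cases a <;> rfl
    rw [e]
    exact hf a b
  · rintro ⟨i, j, k, l, h1, h2, h3, h⟩
    refine ⟨OrderEmbedding.ofStrictMono ![i, j, k, l] ?_, h⟩
    rw [Fin.strictMono_iff_lt_succ]
    intro a
    fin_cases a
    · exact h1
    · exact h2
    · exact h3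

lemma contains3142_iff {n : ℕ} (π : Equiv.Perm (Fin n)) :
    ContainsPat π pattern3142 ↔ ∃ i j k l : Fin n, i < j ∧ j < k ∧ k < l ∧
      π j < π l ∧ π l < π i ∧ π i < π k := by
  rw [containsPat_iff]
  refine exists_congr fun i => exists_congr fun j => exists_congr fun k => exists_congr fun l =>
    and_congr_right fun _ => and_congr_right fun _ => and_congr_right fun _ => ⟨fun h => ?_, ?_⟩
  · exact ⟨(h 1 3).1 (by decide), (h 3 0).1 (by decide), (h 0 2).1 (by decide)⟩
  · rintro ⟨h1, h2, h3⟩ a b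
    fin_cases a <;> fin_cases b <;> simp [pattern3142] <;> omega

lemma contains2413_iff {n : ℕ} (π : Equiv.Perm (Fin n)) :
    ContainsPat π pattern2413 ↔ ∃ i j k l : Fin n, i < j ∧ j < k ∧ k < l ∧
      π l < π j ∧ π i < π l ∧ π k < π i := by
  rw [containsPat_iff]
  refine exists_congr fun i => exists_congr fun j => exists_congr fun k => exists_congr fun l =>
    and_congr_right fun _ => and_congr_right fun _ => and_congr_right fun _ => ⟨fun h => ?_, ?_⟩
  · exact ⟨(h 3 1).1 (by decide), (h 0 3).1 (by decide), (h 2 0).1 (by decide)⟩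
  · rintro ⟨h1, h2, h3⟩ a b
    fin_cases a <;> fin_cases b <;> simp [pattern2413] <;> omega

lemma separable_iff {m : ℕ} (π : Equiv.Perm (Fin (m + 1))) :
    Separable π ↔ Avoid m (seqOf π) := by
  rw [Separable, contains2413_iff, contains3142_iff]
  constructor
  · rintro ⟨h1, h2⟩ b i j k l hij hjk hkl hl ⟨a1, a2, a3⟩
    simp only [seqOf, dif_pos (show i < m + 1 by omega), dif_pos (show j < m + 1 by omega),
      dif_pos (show k < m + 1 by omega), dif_pos (show l < m + 1 by omega)] at a1 a2 a3
    cases b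
    · exact h1 ⟨_, _, _, _, hij, hjk, hkl, a1, a2, a3⟩
    · exact h2 ⟨_, _, _, _, hij, hjk, hkl, a1, a2, a3⟩
  · intro h
    constructor
    · rintro ⟨i, j, k, l, hij, hjk, hkl, a1, a2, a3⟩
      refine h false i j k l hij hjk hkl (by omega) ?_
      simp only [seqOf_coe]
      exact ⟨a1, a2, a3⟩
    · rintro ⟨i, j, k, l, hij, hjk, hkl, a1, a2, a3⟩
      refine h true i j k l hij hjk hkl (by omega) ?_
      simp only [seqOf_coe]
      exact ⟨a1, a2, a3⟩

lemma initial_run_iff {n : ℕ} (π : Equiv.Perm (Fin n)) {k : ℕ} (hk : k ≤ n) :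
    (∀ i j : Fin n, (i : ℕ) < (j : ℕ) → (j : ℕ) < k → π i < π j) ↔
      ∀ i, i + 1 < k → seqOf π i < seqOf π (i + 1) := by
  constructor
  · intro h i hi
    rw [seqOf, seqOf, dif_pos (by omega), dif_pos (by omega)]
    exact h _ _ (by simp) hi
  · intro h i j hij hj
    have key : ∀ d, (i : ℕ) + 1 + d < k → seqOf π i < seqOf π (i + 1 + d) := by
      intro d
      induction d with
      | zero => intro hd; exact h i hd
      | succ d ih => intro hd; exact (ih (by omega)).trans (h _ hd)
    have := key (j - (i + 1)) (by omega)
    rw [show (i : ℕ) + 1 + (j - (i + 1)) = j by omega, seqOf_coe, seqOf_coe] at this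
    exact this

lemma iar_eq_iff {n : ℕ} (π : Equiv.Perm (Fin n)) {k : ℕ} (hk : 1 ≤ k) (hkn : k ≤ n) :
    iar π = k ↔ (∀ i, i + 1 < k → seqOf π i < seqOf π (i + 1)) ∧
      (k < n → ¬ seqOf π (k - 1) < seqOf π k) := by
  rw [iar, Nat.findGreatest_eq_iff]
  constructor
  · rintro ⟨-, h1, h2⟩
    have h1 := (initial_run_iff π hkn).1 (h1 (by omega))
    refine ⟨h1, fun hlt hasc => h2 (Nat.lt_succ_self k) hlt ?_⟩
    refine (initial_run_iff π hlt).2 fun i hi => ?_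
    rcases Nat.lt_or_ge (i + 1) k with h | h
    · exact h1 i h
    · obtain rfl : k = i + 1 := by omega
      exact hasc
  · rintro ⟨h1, h2⟩
    refine ⟨hkn, fun _ => (initial_run_iff π hkn).2 h1, fun j hkj hjn hrun => ?_⟩
    have := (initial_run_iff π hjn).1 hrun (k - 1) (by omega)
    rw [show k - 1 + 1 = k by omega] at this
    exact h2 (by omega) this

lemma Represents.memDT_iff {t : DTree} {n k : ℕ} (hk : 1 ≤ k) (hkn : k ≤ n)
    (h : t.labels.length + 1 = n) (ok : t.RightOk) {π : Equiv.Perm (Fin n)}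
    (hπ : Represents t (seqOf π)) : MemDT n k t ↔ iar π = k := by
  rw [iar_eq_iff π hk hkn]
  have e : k - 1 + 1 = k := by omega
  constructor
  · rintro ⟨-, -, h1, h2⟩
    refine ⟨fun i hi => ?_, fun hlt => ?_⟩
    · have := h1 i (by omega)
      rw [hπ.labels_get i (by omega)] at this
      simpa using this
    · have := h2 (by omega)
      rw [hπ.labels_get _ (by omega), e] at this
      simpa using this
  · rintro ⟨h1, h2⟩
    refine ⟨ok, by omega, fun i hi => ?_, fun hle => ?_⟩
    · rw [hπ.labels_get i (by omega)]
      simpa using h1 i (by omega)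
    · rw [hπ.labels_get _ (by omega), e]
      simpa using h2 (by omega)

/-- For all `1 ≤ k ≤ n`, the number of di-sk trees in `DT_{n,k}` equals the
number of separable permutations of `[n]` with `iar` equal to `k`. -/
theorem stmt10 (n k : ℕ) (hk : 1 ≤ k) (hkn : k ≤ n) :
    DTcard n k = p n k := by
  obtain ⟨m, rfl⟩ : ∃ m, n = m + 1 := ⟨n - 1, by omega⟩
  have hlen : ∀ t : {t : DTree // MemDT (m + 1) k t}, t.1.labels.length + 1 = m + 1 :=
    fun t => by have := t.2.2.1; omega
  choose F hF using fun t : {t : DTree // MemDT (m + 1) k t} => exists_perm t.1 (hlen t)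
  have hsep : ∀ t, Separable (F t) ∧ iar (F t) = k := fun t => by
    refine ⟨(separable_iff _).2 ?_, ((hF t).memDT_iff hk hkn (hlen t) t.2.1).1 t.2⟩
    have := (hF t).avoid
    rwa [show t.1.labels.length = m from Nat.succ_injective (hlen t)] at this
  refine Nat.card_eq_of_bijective
    (fun t => (⟨F t, hsep t⟩ : {π : Equiv.Perm (Fin (m + 1)) // Separable π ∧ iar π = k}))
    ⟨fun s t hst => ?_, fun ⟨π, hπ, hiar⟩ => ?_⟩
  · have e : F s = F t := congrArg Subtype.val hst
    have hs := hF s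
    rw [e] at hs
    exact Subtype.ext (hs.unique (hF t) s.2.1 t.2.1 (by have := hlen s; have := hlen t; omega))
  · obtain ⟨t, ht, ok, hrep⟩ := exists_tree m (seqOf π)
      (fun i j hij hj => seqOf_ne π i j hij (by omega)) ((separable_iff π).1 hπ)
    have hmem : MemDT (m + 1) k t := (hrep.memDT_iff hk hkn (by omega) ok).2 hiar
    exact ⟨⟨t, hmem⟩, Subtype.ext (perm_unique (hlen ⟨t, hmem⟩) (hF ⟨t, hmem⟩) hrep)⟩
end

section
/- For every integer n ≥ 2, |DT_{n,1}| = Σ_{j=1}^{n-1} 2^{j-1} · |DT_{n-1,j}|. -/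
namespace DTree

open PowerSeries
open scoped Classical

/-! ### Enumerating trees and generating functions -/

/-- All labeled binary trees of height at most `d`. -/
def ofHeight : ℕ → Finset DTree
  | 0 => {nil}
  | d + 1 => insert nil
      ((Finset.univ ×ˢ (ofHeight d ×ˢ ofHeight d)).image fun p => node p.1 p.2.1 p.2.2)

lemma mem_ofHeight (t : DTree) : ∀ d, t.labels.length ≤ d → t ∈ ofHeight d := by
  induction t with
  | nil => intro d _; cases d <;> simp [ofHeight]
  | node b l r ihl ihr =>
    intro d hd
    simp only [labels, List.length_append, List.length_cons] at hd
    obtain ⟨d, rfl⟩ : ∃ e, d = e + 1 := ⟨d - 1, by omega⟩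
    have h1 := ihl d (by omega)
    have h2 := ihr d (by omega)
    simp [ofHeight, h1, h2]

/-- All labeled binary trees with `n` nodes. -/
def ofSize (n : ℕ) : Finset DTree := (ofHeight n).filter fun t => t.labels.length = n

@[simp] lemma mem_ofSize {n : ℕ} {t : DTree} : t ∈ ofSize n ↔ t.labels.length = n := by
  simp only [ofSize, Finset.mem_filter, and_iff_right_iff_imp]
  exact fun h => mem_ofHeight t n h.le

lemma ofSize_zero : ofSize 0 = {nil} := by
  ext t
  cases t <;> simp [labels]

lemma sum_ofSize_succ (n : ℕ) (f : DTree → ℤ) :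
    ∑ t ∈ ofSize (n + 1), f t = ∑ p ∈ Finset.HasAntidiagonal.antidiagonal n,
      ∑ q ∈ ofSize p.1 ×ˢ ofSize p.2, (f (node true q.1 q.2) + f (node false q.1 q.2)) := by
  have h : ∀ q : DTree × DTree, f (node true q.1 q.2) + f (node false q.1 q.2)
      = ∑ b : Bool, f (node b q.1 q.2) := fun q => by simp
  simp_rw [h, ← Finset.sum_product', Finset.sum_sigma']
  symm
  refine Finset.sum_bij (fun x _ => node x.2.2 x.2.1.1 x.2.1.2) ?_ ?_ ?_ ?_
  · rintro ⟨⟨i, j⟩, ⟨l, r⟩, b⟩ hx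
    simp only [Finset.mem_sigma, Finset.HasAntidiagonal.mem_antidiagonal, Finset.mem_product, mem_ofSize] at hx
    simp only [mem_ofSize, labels, List.length_append, List.length_cons]
    omega
  · rintro ⟨⟨i, j⟩, ⟨l, r⟩, b⟩ hx ⟨⟨i', j'⟩, ⟨l', r'⟩, b'⟩ hx' e
    simp only [Finset.mem_sigma, Finset.HasAntidiagonal.mem_antidiagonal, Finset.mem_product, mem_ofSize] at hx hx'
    simp only [node.injEq] at e
    obtain ⟨rfl, rfl, rfl⟩ := e
    obtain ⟨-, ⟨rfl, rfl⟩, -⟩ := hx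
    obtain ⟨-, ⟨rfl, rfl⟩, -⟩ := hx'
    rfl
  · intro t ht
    cases t with
    | nil => simp [labels] at ht
    | node b l r =>
      refine ⟨⟨(l.labels.length, r.labels.length), (l, r), b⟩, ?_, rfl⟩
      simp only [mem_ofSize, labels, List.length_append, List.length_cons] at ht
      simp only [Finset.mem_sigma, Finset.HasAntidiagonal.mem_antidiagonal, Finset.mem_product, mem_ofSize,
        Finset.mem_univ, and_self, and_true]
      omega
  · intros; rfl

/-- The generating function of labeled binary trees by number of nodes, with weight `f`. -/
noncomputable def gf (f : DTree → ℤ) : PowerSeries ℤ :=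
  PowerSeries.mk fun n => ∑ t ∈ ofSize n, f t

lemma gf_sub (f g : DTree → ℤ) : gf (fun t => f t - g t) = gf f - gf g := by
  ext n; simp [gf]

lemma gf_add (f g : DTree → ℤ) : gf (fun t => f t + g t) = gf f + gf g := by
  ext n; simp [gf, Finset.sum_add_distrib]

/-- Decomposition at the root. The value at a node with label `⊕` is allowed two product terms. -/
lemma gf_eq (f g h g' h' k m : DTree → ℤ) (a : ℤ) (h0 : f nil = a)
    (h1 : ∀ l r, f (node true l r) = g l * h r + g' l * h' r)
    (h2 : ∀ l r, f (node false l r) = k l * m r) :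
    gf f = C a + X * (gf g * gf h + gf g' * gf h' + gf k * gf m) := by
  ext n
  cases n with
  | zero => simp [gf, ofSize_zero, h0]
  | succ n =>
    rw [map_add, coeff_succ_X_mul]
    simp only [gf, coeff_mk, map_add, coeff_mul, sum_ofSize_succ, h1, h2, coeff_C,
      Nat.succ_ne_zero, if_false, zero_add, Finset.sum_add_distrib, Finset.sum_mul_sum,
      Finset.sum_product]

/-! ### Weights -/

/-- The number of leading `⊕` labels in in-order. -/
def lead (t : DTree) : ℕ := (t.labels.takeWhile id).length

/-- The root of the tree, if any, has a label other than `b`. -/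
def RootNe (b : Bool) : DTree → Prop
  | nil => True
  | node b' _ _ => b ≠ b'

/-- Indicator of di-sk trees. -/
noncomputable def wS (t : DTree) : ℤ := if t.RightOk then 1 else 0

/-- Indicator of di-sk trees that are empty or have root label `≠ b`. -/
noncomputable def wQ (b : Bool) (t : DTree) : ℤ := if t.RightOk ∧ t.RootNe b then 1 else 0

/-- Indicator of di-sk trees whose first label in in-order is `⊖`. -/
noncomputable def wM (t : DTree) : ℤ :=
  if t.RightOk ∧ t.labels[0]? = some false then 1 else 0

/-- `2 ^ lead` on di-sk trees. -/
noncomputable def wW (t : DTree) : ℤ := if t.RightOk then 2 ^ t.lead else 0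

/-- `2 ^ lead` on di-sk trees all of whose labels are `⊕`. -/
noncomputable def wC (t : DTree) : ℤ :=
  if t.RightOk ∧ ∀ b ∈ t.labels, b = true then 2 ^ t.lead else 0

/-- `2 ^ lead` on di-sk trees that are empty or have root `⊖`. -/
noncomputable def wV (t : DTree) : ℤ := if t.RightOk ∧ t.RootNe true then 2 ^ t.lead else 0

/-- Indicator of the empty tree. -/
noncomputable def wE (t : DTree) : ℤ := if t = nil then 1 else 0

lemma rightOk_node (b : Bool) (l r : DTree) :
    (node b l r).RightOk ↔ l.RightOk ∧ r.RightOk ∧ r.RootNe b := by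
  cases r <;> simp [RightOk, RootNe]

lemma takeWhile_id_of_all (L : List Bool) (h : ∀ b ∈ L, b = true) : L.takeWhile id = L := by
  rw [List.takeWhile_eq_self_iff]; simpa using h

lemma lead_node_false (l r : DTree) : (node false l r).lead = l.lead := by
  simp only [lead, labels]
  rw [List.takeWhile_append]
  split_ifs <;> simp_all

lemma lead_node_true_of_all (l r : DTree) (h : ∀ b ∈ l.labels, b = true) :
    (node true l r).lead = l.lead + 1 + r.lead := by
  simp only [lead, labels]
  rw [List.takeWhile_append, takeWhile_id_of_all _ h]
  simp; omega

lemma lead_node_true_of_not (l r : DTree) (h : ¬ ∀ b ∈ l.labels, b = true) :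
    (node true l r).lead = l.lead := by
  simp only [lead, labels]
  rw [List.takeWhile_append, if_neg]
  intro e
  apply h
  have := (List.takeWhile_prefix id (l := l.labels)).eq_of_length e
  rw [List.takeWhile_eq_self_iff] at this
  simpa using this

/-- In an all-`⊕` di-sk tree no node has a right child: such a child would have to be `⊖`. -/
lemma all_rootNe_iff (r : DTree) :
    ((∀ b ∈ r.labels, b = true) ∧ r.RootNe true) ↔ r = nil := by
  cases r with
  | nil => simp [labels, RootNe]
  | node b l r =>
    simp only [labels, RootNe, reduceCtorEq, iff_false, not_and]
    intro h
    simp [h b (by simp)]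

/-! ### The functional equations -/

lemma gf_zero : gf (fun _ => 0) = 0 := by ext n; simp [gf]

lemma gf_wE : gf wE = 1 := by
  rw [gf_eq wE (fun _ => 0) (fun _ => 0) (fun _ => 0) (fun _ => 0) (fun _ => 0) (fun _ => 0) 1] <;>
    simp [gf_zero, wE]

lemma gf_wS : gf wS = 1 + X * (gf wS * gf (wQ true) + gf wS * gf (wQ false)) := by
  conv_lhs => rw [gf_eq wS wS (wQ true) (fun _ => 0) (fun _ => 0) wS (wQ false) 1
    (by simp [wS, RightOk])
    (by intro l r; simp only [wS, wQ, rightOk_node]; split_ifs <;> simp_all)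
    (by intro l r; simp only [wS, wQ, rightOk_node]; split_ifs <;> simp_all)]
  simp [gf_zero]

lemma gf_wQ_true : gf (wQ true) = 1 + X * (gf wS * gf (wQ false)) := by
  conv_lhs => rw [gf_eq (wQ true) (fun _ => 0) (fun _ => 0) (fun _ => 0) (fun _ => 0) wS (wQ false) 1
    (by simp [wQ, RightOk, RootNe])
    (by intro l r; simp [wQ, RootNe])
    (by intro l r; simp only [wS, wQ, rightOk_node, RootNe.eq_2]; split_ifs <;> simp_all)]
  simp [gf_zero]

lemma gf_wQ_false : gf (wQ false) = 1 + X * (gf wS * gf (wQ true)) := by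
  conv_lhs => rw [gf_eq (wQ false) wS (wQ true) (fun _ => 0) (fun _ => 0) (fun _ => 0) (fun _ => 0) 1
    (by simp [wQ, RightOk, RootNe])
    (by intro l r; simp only [wS, wQ, rightOk_node, RootNe.eq_2]; split_ifs <;> simp_all)
    (by intro l r; simp [wQ, RootNe])]
  simp [gf_zero]

lemma labels_eq_nil {t : DTree} (h : t.labels = []) : t = nil := by
  cases t <;> simp_all [labels]

lemma gf_wM : gf wM = X * (gf wM * gf (wQ true) + (gf wM + 1) * gf (wQ false)) := by
  conv_lhs => rw [gf_eq wM wM (wQ true) (fun _ => 0) (fun _ => 0)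
    (fun t => wM t + wE t) (wQ false) 0
    (by simp [wM, labels])
    (by
      intro l r
      have h : (node true l r).labels[0]? = some false ↔ l.labels[0]? = some false := by
        cases h : l.labels <;> simp [labels, h]
      simp only [wM, wQ, rightOk_node, h]; split_ifs <;> simp_all)
    (by
      intro l r
      by_cases hl : l = nil
      · subst hl
        simp only [wM, wQ, wE, rightOk_node]
        simp [labels, RightOk]
      · have h : (node false l r).labels[0]? = some false ↔ l.labels[0]? = some false := by
          cases h : l.labels with
          | nil => exact absurd (labels_eq_nil h) hl
          | cons => simp [labels, h]
        simp only [wM, wQ, wE, rightOk_node, h, hl]; split_ifs <;> simp_all)]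
  rw [gf_add, gf_wE]
  simp [gf_zero]

lemma gf_wC : gf wC = 1 + X * (2 * gf wC) := by
  conv_lhs => rw [gf_eq wC wC wE wC wE (fun _ => 0) (fun _ => 0) 1
    (by simp [wC, RightOk, labels, lead])
    (by
      intro l r
      by_cases hr : r = nil
      · subst hr
        by_cases hl : ∀ b ∈ l.labels, b = true
        · have h : ∀ b ∈ (node true l nil).labels, b = true := by
            intro b hb
            simp only [labels, List.mem_append, List.mem_singleton] at hb
            exact hb.elim (hl b) id
          have hok : (node true l nil).RightOk ↔ l.RightOk := by
            simp [rightOk_node, RightOk.eq_1, RootNe]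
          have hC : ∀ t : DTree, (∀ b ∈ t.labels, b = true) →
              wC t = if t.RightOk then 2 ^ t.lead else 0 :=
            fun t ht => if_congr (and_iff_left ht) rfl rfl
          rw [hC _ h, hC _ hl, lead_node_true_of_all l nil hl]
          simp only [hok, wE, if_true]
          split_ifs
          · simp [lead, labels]; ring
          · simp
        · have h : ¬ ∀ b ∈ (node true l nil).labels, b = true := by
            intro h
            exact hl fun b hb => h b (by simp [labels, hb])
          simp only [wC, h, hl, and_false, if_false]; simp
      · have h : ¬ ((node true l r).RightOk ∧ ∀ b ∈ (node true l r).labels, b = true) := by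
          rintro ⟨h1, h2⟩
          rw [rightOk_node] at h1
          exact hr ((all_rootNe_iff r).1 ⟨fun b hb => h2 b (by simp [labels, hb]), h1.2.2⟩)
        rw [wC, if_neg h]; simp [wE, hr])
    (by
      intro l r
      have h : ¬ ∀ b ∈ (node false l r).labels, b = true := by
        intro h; simpa using h false (by simp [labels])
      simp only [wC, h, and_false, if_false]; simp)]
  rw [gf_wE, gf_zero]
  simp; ring

lemma wW_node_false (l r : DTree) : wW (node false l r) = wW l * wQ false r := by
  simp only [wW, wQ, rightOk_node, lead_node_false]; split_ifs <;> simp_all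

lemma gf_wV : gf wV = 1 + X * (gf wW * gf (wQ false)) := by
  conv_lhs => rw [gf_eq wV (fun _ => 0) (fun _ => 0) (fun _ => 0) (fun _ => 0) wW (wQ false) 1
    (by simp [wV, RightOk, RootNe, lead, labels])
    (by intro l r; simp [wV, RootNe])
    (by intro l r; rw [← wW_node_false]; simp [wV, wW, RootNe])]
  simp [gf_zero]

lemma gf_wW : gf wW = 1 + X * ((gf wW - gf wC) * gf (wQ true) + 2 * gf wC * gf wV
    + gf wW * gf (wQ false)) := by
  conv_lhs => rw [gf_eq wW (fun t => wW t - wC t) (wQ true) (fun t => wC t + wC t) wV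
    wW (wQ false) 1
    (by simp [wW, RightOk, lead, labels])
    (by
      intro l r
      by_cases hl : ∀ b ∈ l.labels, b = true
      · have h : wC l = wW l := by
          unfold wC wW
          exact if_congr (and_iff_left hl) rfl rfl
        rw [h, sub_self, zero_mul, zero_add]
        simp only [wW, wV, rightOk_node, lead_node_true_of_all l r hl]
        split_ifs <;> first | (exfalso; tauto) | ring
      · have h : wC l = 0 := if_neg fun h => hl h.2
        rw [h]
        simp only [wW, wQ, rightOk_node, lead_node_true_of_not l r hl]
        split_ifs <;> simp_all)
    wW_node_false]
  rw [gf_sub, gf_add, map_one]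
  ring

/-- Elimination in the system of functional equations. -/
lemma gf_wM_eq : gf wM = X * gf wW := by
  have hS := gf_wS
  have hQ : gf (wQ false) = gf (wQ true) := by
    have hne : (1 + X * gf wS : PowerSeries ℤ) ≠ 0 := by
      intro h; simpa using congrArg constantCoeff h
    refine mul_left_cancel₀ hne ?_
    linear_combination gf_wQ_false - gf_wQ_true
  have hq := gf_wQ_true
  have hM := gf_wM
  have hC := gf_wC
  have hV := gf_wV
  have hW := gf_wW
  rw [hQ] at hS hq hM hV hW
  generalize gf (wQ true) = q at *
  generalize gf wS = S at *
  generalize gf wM = M at *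
  generalize gf wC = c at *
  generalize gf wV = V at *
  generalize gf wW = W at *
  have hne1 : (1 - 2 * X * q : PowerSeries ℤ) ≠ 0 := by
    intro h; simpa using congrArg constantCoeff h
  have hne2 : (1 - 2 * X - 2 * X * q + 2 * X ^ 2 * q : PowerSeries ℤ) ≠ 0 := by
    intro h; simpa using congrArg constantCoeff h
  have hq' : q * (1 - 2 * X * q) = 1 - X * q := by
    linear_combination (1 - 2 * X * q) * hq + X * q * hS
  have hW' : W * (1 - 2 * X - 2 * X * q + 2 * X ^ 2 * q) = 1 - X * q := by
    rw [hV] at hW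
    linear_combination (1 - 2 * X) * hW + (2 * X - X * q + 2 * X ^ 2 * W * q) * hC
  have hWq : W * (1 - 2 * X * q) = q := by
    refine mul_left_cancel₀ hne2 ?_
    linear_combination (1 - 2 * X * q) * hW' - hq'
  refine mul_left_cancel₀ hne1 ?_
  linear_combination hM - X * hWq

/-! ### Back to cardinalities -/

lemma takeWhile_length_iff (L : List Bool) (k : ℕ) (hk : k ≤ L.length) :
    ((∀ i < k, L[i]? = some true) ∧ (k < L.length → L[k]? = some false)) ↔
      (L.takeWhile id).length = k := by
  induction L generalizing k with
  | nil => simp at hk; simp [hk]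
  | cons b L ih =>
    cases k with
    | zero => cases b <;> simp
    | succ k =>
      have := ih k (by simpa using hk)
      cases b with
      | false =>
        simp only [List.takeWhile_cons, id, Bool.false_eq_true, if_false, List.length_nil]
        constructor
        · rintro ⟨h, -⟩; simpa using h 0 (by omega)
        · intro h; omega
      | true =>
        simp only [List.takeWhile_cons, id, if_true, List.length_cons, Nat.add_right_cancel_iff,
          ← this, List.getElem?_cons_succ, Nat.add_lt_add_iff_right]
        refine and_congr_left fun _ => ⟨fun h i hi => ?_, fun h i hi => ?_⟩
        · simpa using h (i + 1) (by omega)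
        · cases i with
          | zero => simp
          | succ i => simpa using h i (by omega)

lemma memDT_iff {n k : ℕ} (hk : 1 ≤ k) (hkn : k ≤ n) (t : DTree) :
    MemDT n k t ↔ t ∈ ofSize (n - 1) ∧ t.RightOk ∧ t.lead = k - 1 := by
  rw [mem_ofSize, MemDT, IsDiSk, and_left_comm]
  refine and_congr_right fun h => and_congr_right fun _ => ?_
  rw [lead, ← takeWhile_length_iff _ _ (by omega), h]
  refine and_congr_right fun _ => imp_congr_left ?_
  omega

lemma DTcard_eq {n k : ℕ} (hk : 1 ≤ k) (hkn : k ≤ n) :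
    (DTcard n k : ℤ) = ∑ t ∈ ofSize (n - 1), if t.RightOk ∧ t.lead = k - 1 then 1 else 0 := by
  rw [DTcard, Nat.subtype_card ((ofSize (n - 1)).filter fun t => t.RightOk ∧ t.lead = k - 1)
    fun t => by rw [memDT_iff hk hkn, Finset.mem_filter]]
  simp

lemma DTcard_one (m : ℕ) : (DTcard (m + 2) 1 : ℤ) = coeff (m + 1) (gf wM) := by
  rw [DTcard_eq le_rfl (by omega), gf, coeff_mk]
  refine Finset.sum_congr rfl fun t ht => ?_
  have h : t.lead = 0 ↔ t.labels[0]? = some false := by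
    rw [mem_ofSize] at ht
    rw [lead, ← takeWhile_length_iff _ 0 (by omega)]
    simp [ht]
  simp only [wM, ← h]

lemma sum_DTcard (m : ℕ) :
    ∑ j ∈ Finset.Ico 1 (m + 2), 2 ^ (j - 1) * (DTcard (m + 1) j : ℤ) = coeff m (gf wW) := by
  have hc : ∀ j ∈ Finset.Ico 1 (m + 2), 2 ^ (j - 1) * (DTcard (m + 1) j : ℤ) =
      ∑ t ∈ ofSize m, 2 ^ (j - 1) * if t.RightOk ∧ t.lead = j - 1 then 1 else 0 := by
    intro j hj
    rw [Finset.mem_Ico] at hj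
    rw [DTcard_eq hj.1 (by omega), Finset.mul_sum, Nat.add_sub_cancel]
  rw [Finset.sum_congr rfl hc, Finset.sum_comm, gf, coeff_mk]
  refine Finset.sum_congr rfl fun t ht => ?_
  have hle : t.lead ≤ m := by
    rw [mem_ofSize] at ht
    rw [← ht]
    exact (List.takeWhile_prefix id).length_le
  rw [Finset.sum_eq_single (t.lead + 1)]
  · simp [wW]
  · intro j hj hne
    rw [Finset.mem_Ico] at hj
    rw [if_neg (by omega), mul_zero]
  · intro h; exact absurd (Finset.mem_Ico.2 ⟨by omega, by omega⟩) h

end DTree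

/-- For every integer `n ≥ 2`, `|DT_{n,1}| = Σ_{j=1}^{n-1} 2^{j-1} ⬝ |DT_{n-1,j}|`. -/
theorem stmt11 (n : ℕ) (hn : 2 ≤ n) :
    DTcard n 1 = ∑ j ∈ Finset.Ico 1 n, 2 ^ (j - 1) * DTcard (n - 1) j := by
  obtain ⟨m, rfl⟩ : ∃ m, n = m + 2 := ⟨n - 2, by omega⟩
  have h := DTree.DTcard_one m
  rw [DTree.gf_wM_eq, PowerSeries.coeff_succ_X_mul, ← DTree.sum_DTcard] at h
  exact_mod_cast h
end

section
/- Let R be a commutative ring and u, v ∈ R. For every integer n ≥ 1, r_{u,v}(n,0) = u·r_{u,v}(n-1,0) + (1+v)·Σ_{j=0}^{n-2} (2-u+v)^j · r_{u,v}(n-1,j+1). -/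
/-- `ruv R u v n k` : the `(u,v)`-weighted count `Σ_p u^{h0(p)} v^{h(p)}` over all
Schröder paths `p` of semilength `n` with exactly `k` hills. -/
noncomputable def ruv (R : Type*) [CommRing R] (u v : R) (n k : ℕ) : R :=
  ∑ᶠ w ∈ {w : List SStep | IsSchroeder n w ∧ hills w = k}, u ^ h0 w * v ^ hpos w

namespace SchroederAux

open PowerSeries

/-! ### Path suffixes and their statistics -/

/-- `w` is the remainder, from height `h` on, of a Schröder path, with `n` steps `U` or `H`. -/
def Good (n h : ℕ) (w : List SStep) : Prop :=
  w.count SStep.U + h = w.count SStep.D ∧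
  w.count SStep.U + w.count SStep.H = n ∧
  ∀ i : ℕ, (w.take i).count SStep.D ≤ (w.take i).count SStep.U + h

/-- The number of hills of a path suffix starting at height `h`. -/
def hillsAt (h : ℕ) (w : List SStep) : ℕ :=
  ((Finset.range w.length).filter (fun i =>
    w[i]? = some SStep.U ∧ w[i+1]? = some SStep.D ∧
    (w.take i).count SStep.U + h = (w.take i).count SStep.D)).card

/-- The number of horizontal steps at height `0` of a path suffix starting at height `h`. -/
def h0At (h : ℕ) (w : List SStep) : ℕ :=
  ((Finset.range w.length).filter (fun i =>
    w[i]? = some SStep.H ∧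
    (w.take i).count SStep.U + h = (w.take i).count SStep.D)).card

/-- The number of horizontal steps at positive height of a path suffix starting at height `h`. -/
def hposAt (h : ℕ) (w : List SStep) : ℕ :=
  ((Finset.range w.length).filter (fun i =>
    w[i]? = some SStep.H ∧
    (w.take i).count SStep.D < (w.take i).count SStep.U + h)).card

lemma card_filter_range_succ (m : ℕ) (p : ℕ → Prop) [DecidablePred p] :
    ((Finset.range (m + 1)).filter p).card =
      (if p 0 then 1 else 0) + ((Finset.range m).filter (fun i => p (i + 1))).card := by
  simp only [Finset.card_filter]
  rw [Finset.sum_range_succ']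
  ring

lemma hillsAt_H (h : ℕ) (w : List SStep) : hillsAt h (SStep.H :: w) = hillsAt h w := by
  simp [hillsAt, card_filter_range_succ]

lemma hillsAt_D (h : ℕ) (w : List SStep) : hillsAt (h + 1) (SStep.D :: w) = hillsAt h w := by
  simp [hillsAt, card_filter_range_succ, ← add_assoc]

lemma hillsAt_U (h : ℕ) (w : List SStep) :
    hillsAt h (SStep.U :: w) =
      (if w[0]? = some SStep.D ∧ h = 0 then 1 else 0) + hillsAt (h + 1) w := by
  simp [hillsAt, card_filter_range_succ, add_assoc, add_comm h 1]

lemma h0At_H (h : ℕ) (w : List SStep) :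
    h0At h (SStep.H :: w) = (if h = 0 then 1 else 0) + h0At h w := by
  simp [h0At, card_filter_range_succ]

lemma h0At_D (h : ℕ) (w : List SStep) : h0At (h + 1) (SStep.D :: w) = h0At h w := by
  simp [h0At, card_filter_range_succ, ← add_assoc]

lemma h0At_U (h : ℕ) (w : List SStep) : h0At h (SStep.U :: w) = h0At (h + 1) w := by
  simp [h0At, card_filter_range_succ, add_assoc, add_comm h 1]

lemma hposAt_H (h : ℕ) (w : List SStep) :
    hposAt h (SStep.H :: w) = (if 0 < h then 1 else 0) + hposAt h w := by
  simp [hposAt, card_filter_range_succ]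

lemma hposAt_D (h : ℕ) (w : List SStep) : hposAt (h + 1) (SStep.D :: w) = hposAt h w := by
  simp [hposAt, card_filter_range_succ, ← add_assoc]

lemma hposAt_U (h : ℕ) (w : List SStep) : hposAt h (SStep.U :: w) = hposAt (h + 1) w := by
  simp [hposAt, card_filter_range_succ, add_assoc, add_comm h 1]

lemma good_nil (n h : ℕ) : Good n h [] ↔ n = 0 ∧ h = 0 := by
  simp [Good]; omega

lemma forall_take_cons (a : SStep) (w : List SStep) (h : ℕ) :
    (∀ i : ℕ, ((a :: w).take i).count SStep.D ≤ ((a :: w).take i).count SStep.U + h) ↔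
      ∀ i : ℕ, (a :: w.take i).count SStep.D ≤ (a :: w.take i).count SStep.U + h := by
  constructor
  · intro H i
    simpa using H (i + 1)
  · intro H i
    cases i with
    | zero => simp
    | succ i => simpa using H i

lemma good_H (n h : ℕ) (w : List SStep) :
    Good n h (SStep.H :: w) ↔ ∃ m, n = m + 1 ∧ Good m h w := by
  unfold Good
  rw [forall_take_cons]
  simp
  constructor
  · rintro ⟨a, b, c⟩; exact ⟨by omega, a, c⟩
  · rintro ⟨a, b, c⟩; exact ⟨b, by omega, c⟩

lemma good_U (n h : ℕ) (w : List SStep) :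
    Good n h (SStep.U :: w) ↔ ∃ m, n = m + 1 ∧ Good m (h + 1) w := by
  unfold Good
  rw [forall_take_cons]
  simp
  constructor
  · rintro ⟨a, b, c⟩
    exact ⟨by omega, by omega, fun i => by have := c i; omega⟩
  · rintro ⟨a, b, c⟩
    exact ⟨by omega, by omega, fun i => by have := c i; omega⟩

lemma good_D (n h : ℕ) (w : List SStep) :
    Good n h (SStep.D :: w) ↔ ∃ k, h = k + 1 ∧ Good n k w := by
  unfold Good
  rw [forall_take_cons]
  simp
  constructor
  · rintro ⟨a, b, c⟩
    have h1 := c 0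
    simp at h1
    exact ⟨h - 1, by omega, by omega, by omega, fun i => by have := c i; omega⟩
  · rintro ⟨m, rfl, a, b, c⟩
    exact ⟨by omega, by omega, fun i => by have := c i; omega⟩

/-- Prepending a step, as an embedding. -/
def consEmb (a : SStep) : List SStep ↪ List SStep := ⟨List.cons a, List.cons_injective⟩

/-- The finite set of all `w` with `Good n h w`, built by splitting off the first step. -/
def P : ℕ → ℕ → Finset (List SStep)
  | 0, 0 => {[]}
  | 0, h + 1 => (P 0 h).map (consEmb SStep.D)
  | n + 1, 0 => (P n 0).map (consEmb SStep.H) ∪ (P n 1).map (consEmb SStep.U)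
  | n + 1, h + 1 => (P n (h + 1)).map (consEmb SStep.H) ∪
      ((P n (h + 2)).map (consEmb SStep.U) ∪ (P (n + 1) h).map (consEmb SStep.D))

lemma mem_P (w : List SStep) : ∀ n h, w ∈ P n h ↔ Good n h w := by
  induction w with
  | nil =>
    intro n h
    rw [good_nil]
    rcases n with _ | n <;> rcases h with _ | h <;> simp [P, consEmb]
  | cons a w ih =>
    intro n h
    cases a
    · rw [good_U]
      rcases n with _ | n <;> rcases h with _ | h <;> simp [P, consEmb, ih]
    · rw [good_D]
      rcases n with _ | n <;> rcases h with _ | h <;> simp [P, consEmb, ih]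
    · rw [good_H]
      rcases n with _ | n <;> rcases h with _ | h <;> simp [P, consEmb, ih]

lemma disjoint_cons (a b : SStep) (hab : a ≠ b) (s t : Finset (List SStep)) :
    Disjoint (s.map (consEmb a)) (t.map (consEmb b)) := by
  rw [Finset.disjoint_left]
  intro x hx hy
  simp only [Finset.mem_map, consEmb, Function.Embedding.coeFn_mk] at hx hy
  obtain ⟨y, _, rfl⟩ := hx
  obtain ⟨z, _, hz⟩ := hy
  exact hab (List.cons.inj hz).1.symm

section Sums

variable {R : Type*} [CommRing R] (u v : R)

lemma sum_P_succ_zero (f : List SStep → R) (n : ℕ) :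
    ∑ w ∈ P (n + 1) 0, f w =
      ∑ w ∈ P n 0, f (SStep.H :: w) + ∑ w ∈ P n 1, f (SStep.U :: w) := by
  rw [P, Finset.sum_union (disjoint_cons _ _ (by decide) _ _)]
  simp [consEmb]

lemma sum_P_zero_succ (f : List SStep → R) (h : ℕ) :
    ∑ w ∈ P 0 (h + 1), f w = ∑ w ∈ P 0 h, f (SStep.D :: w) := by
  rw [P]
  simp [consEmb]

lemma sum_P_succ_succ (f : List SStep → R) (n h : ℕ) :
    ∑ w ∈ P (n + 1) (h + 1), f w =
      ∑ w ∈ P n (h + 1), f (SStep.H :: w) +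
        (∑ w ∈ P n (h + 2), f (SStep.U :: w) + ∑ w ∈ P (n + 1) h, f (SStep.D :: w)) := by
  rw [P, Finset.sum_union, Finset.sum_union (disjoint_cons _ _ (by decide) _ _)]
  · simp [consEmb]
  · rw [Finset.disjoint_union_right]
    exact ⟨disjoint_cons _ _ (by decide) _ _, disjoint_cons _ _ (by decide) _ _⟩

/-- The weight `u ^ h0 * v ^ hpos` of a path suffix starting at height `h`. -/
def wt (h : ℕ) (w : List SStep) : R := u ^ h0At h w * v ^ hposAt h w

/-- The weighted count of path suffixes from height `h` with exactly `k` hills. -/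
def G (n h k : ℕ) : R := ∑ w ∈ P n h, if hillsAt h w = k then wt u v h w else 0

lemma ruv_eq (n k : ℕ) : ruv R u v n k = G u v n 0 k := by
  have hset : {w : List SStep | IsSchroeder n w ∧ hills w = k} =
      ((P n 0).filter (fun w => hillsAt 0 w = k) : Finset (List SStep)) := by
    ext w
    simp [mem_P, Good, IsSchroeder, hills, hillsAt]
  rw [ruv, hset, finsum_mem_coe_finset, G, Finset.sum_filter]
  rfl

lemma G_zero_zero (k : ℕ) : G u v 0 0 k = if k = 0 then 1 else 0 := by
  simp [G, P, hillsAt, wt, h0At, hposAt, eq_comm]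

lemma G_zero_succ (h k : ℕ) : G u v 0 (h + 1) k = G u v 0 h k := by
  simp only [G, sum_P_zero_succ, hillsAt_D, wt, h0At_D, hposAt_D]

lemma G_succ_succ (n h k : ℕ) :
    G u v (n + 1) (h + 1) k =
      v * G u v n (h + 1) k + G u v n (h + 2) k + G u v (n + 1) h k := by
  simp only [G, sum_P_succ_succ, hillsAt_D, wt, h0At_D, hposAt_D, hillsAt_U, h0At_U, hposAt_U,
    hillsAt_H, h0At_H, hposAt_H, Finset.mul_sum]
  simp [add_assoc, pow_add, mul_left_comm]

/-- The weighted count at height `0` of paths with `k - 1` hills, with value `0` when `k = 0`. -/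
def E (n k : ℕ) : R := if k = 0 then 0 else G u v n 0 (k - 1)

/-- A path starting with `U` has a hill in first position exactly when the next step is `D`;
these paths are counted by `E n k` instead of `G n 0 k`. -/
lemma G_succ_zero (n k : ℕ) :
    G u v (n + 1) 0 k = u * G u v n 0 k + (G u v n 1 k - G u v n 0 k + E u v n k) := by
  have hE : E u v n k = ∑ w ∈ P n 0, if 1 + hillsAt 0 w = k then wt u v 0 w else 0 := by
    rcases k with _ | k
    · simp [E]
    · simp [E, G, add_comm 1]
  have hU : ∑ w ∈ P n 1, (if hillsAt 0 (SStep.U :: w) = k then wt u v 0 (SStep.U :: w) else 0) =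
      G u v n 1 k - G u v n 0 k + E u v n k := by
    rw [hE]
    rcases n with _ | n
    · simp [G, sum_P_zero_succ, hillsAt_D, wt, h0At_D, hposAt_D, hillsAt_U, h0At_U, hposAt_U]
    · simp [G, sum_P_succ_succ, hillsAt_D, wt, h0At_D, hposAt_D, hillsAt_U, h0At_U, hposAt_U]
      ring
  rw [← hU, G, sum_P_succ_zero, G]
  simp only [hillsAt_H, wt, h0At_H, hposAt_H, Finset.mul_sum]
  simp [pow_add, mul_assoc]

/-! ### Generating functions -/

/-- The system satisfied by suffix generating functions, from the first step at positive height. -/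
def StepEq (A : ℕ → R⟦X⟧) : Prop :=
  ∀ h, A (h + 1) = PowerSeries.C v * X * A (h + 1) + X * A (h + 2) + A h

lemma stepEq_mk (g : ℕ → ℕ → R) (h0 : ∀ h, g 0 (h + 1) = g 0 h)
    (h1 : ∀ n h, g (n + 1) (h + 1) = v * g n (h + 1) + g n (h + 2) + g (n + 1) h) :
    StepEq v (fun h => PowerSeries.mk fun n => g n h) := by
  intro h
  ext n
  rcases n with _ | n
  · simp [mul_assoc, h0]
  · simp [mul_assoc, h1, coeff_succ_X_mul]

/-- Coefficient `n` at height `h` is determined by coefficients `n - 1` and by coefficient `n` at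
height `h - 1`, so a solution is determined by its value at height `0`. -/
lemma eq_of_stepEq {A B : ℕ → R⟦X⟧} (hA : StepEq v A) (hB : StepEq v B) (h0 : A 0 = B 0) (h : ℕ) :
    A h = B h := by
  have key : ∀ n h, coeff n (A h) = coeff n (B h) := by
    intro n
    induction n with
    | zero =>
      intro h
      induction h with
      | zero => rw [h0]
      | succ h ih =>
        rw [hA h, hB h]
        simpa [mul_assoc] using ih
    | succ n ihn =>
      intro h
      induction h with
      | zero => rw [h0]
      | succ h ih =>
        rw [hA h, hB h]
        simp only [mul_assoc, map_add, coeff_C_mul, coeff_succ_X_mul, ihn, ih]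
  ext n
  exact key n h

lemma StepEq.mul_right {A : ℕ → R⟦X⟧} (hA : StepEq v A) (B : R⟦X⟧) :
    StepEq v (fun h => A h * B) := by
  intro h
  linear_combination B * hA h

/-- Coefficients of the solution of `StepEq` whose value at height `0` is `1`. -/
def c : ℕ → ℕ → R
  | 0, _ => 1
  | _ + 1, 0 => 0
  | n + 1, h + 1 => v * c n (h + 1) + c n (h + 2) + c (n + 1) h

/-- The solution of `StepEq` whose value at height `0` is `1`. -/
def Cser (h : ℕ) : R⟦X⟧ := PowerSeries.mk fun n => c v n h

lemma stepEq_Cser : StepEq v (Cser v) :=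
  stepEq_mk v (c v) (fun h => by simp [c]) (fun n h => by rw [c])

lemma Cser_zero : Cser v 0 = 1 := by
  ext n
  rcases n with _ | n <;> simp [Cser, c, coeff_one]

lemma Cser_two : Cser v 2 = Cser v 1 * Cser v 1 := by
  refine eq_of_stepEq v (A := fun h => Cser v (h + 1)) (B := fun h => Cser v h * Cser v 1)
    (fun h => stepEq_Cser v (h + 1)) ((stepEq_Cser v).mul_right v _) ?_ 1
  simp [Cser_zero]

/-- The functional equation of Schröder paths with all horizontal steps weighted by `v`. -/
lemma Cser_one : Cser v 1 = 1 + PowerSeries.C v * X * Cser v 1 + X * Cser v 1 ^ 2 := by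
  have h := stepEq_Cser v 0
  rw [zero_add, zero_add, Cser_zero, Cser_two] at h
  linear_combination h

/-- The generating function of `r_{u,v}(n,k)` in `n`. -/
def F (k : ℕ) : R⟦X⟧ := PowerSeries.mk fun n => G u v n 0 k

lemma mk_G_one (k : ℕ) : (PowerSeries.mk fun n => G u v n 1 k) = Cser v 1 * F u v k := by
  refine eq_of_stepEq v (A := fun h => PowerSeries.mk fun n => G u v n h k)
    (B := fun h => Cser v h * F u v k)
    (stepEq_mk v (fun n h => G u v n h k) (fun h => G_zero_succ u v h k)
      (fun n h => G_succ_succ u v n h k)) ((stepEq_Cser v).mul_right v _) ?_ 1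
  simp [Cser_zero, F]

lemma F_zero : F u v 0 =
    1 + PowerSeries.C u * X * F u v 0 + X * ((Cser v 1 - 1) * F u v 0) := by
  rw [sub_mul, ← mk_G_one]
  ext n
  rcases n with _ | n
  · simp [F, mul_assoc, G_zero_zero]
  · simp [F, mul_assoc, coeff_succ_X_mul, G_succ_zero, E, coeff_one]

lemma F_succ_eq (k : ℕ) : F u v (k + 1) =
    PowerSeries.C u * X * F u v (k + 1) + X * ((Cser v 1 - 1) * F u v (k + 1)) +
      X * F u v k := by
  rw [sub_mul, ← mk_G_one]
  ext n
  rcases n with _ | n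
  · simp [F, mul_assoc, G_zero_zero]
  · simp [F, mul_assoc, coeff_succ_X_mul, G_succ_zero, E, add_assoc]

lemma F_succ (k : ℕ) : F u v (k + 1) = X * F u v 0 * F u v k := by
  linear_combination F u v 0 * F_succ_eq u v k - F u v (k + 1) * F_zero u v

lemma F_succ_pow (k : ℕ) : F u v (k + 1) = (X * F u v 0) ^ k * (X * F u v 0 ^ 2) := by
  induction k with
  | zero => rw [F_succ]; ring
  | succ k ih => rw [F_succ, ih]; ring

/-- The self-similar equation behind the recurrence, for `Y = (S - 1) F 0` with `S = Cser v 1`.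
By `F_zero`, `F 0` is the inverse of `1 - u X - X (S - 1)`; multiplying by this series twice
reduces the claim to the functional equation of `S`. -/
lemma Y_eq : (Cser v 1 - 1) * F u v 0 =
    PowerSeries.C (1 + v) * (X * F u v 0 ^ 2) +
      PowerSeries.C (2 - u + v) * (X * F u v 0) * ((Cser v 1 - 1) * F u v 0) := by
  have h1 := F_zero u v
  have h2 := Cser_one v
  have e1 : PowerSeries.C (1 + v) = 1 + PowerSeries.C v := by simp
  have e2 : PowerSeries.C (2 - u + v) = 2 - PowerSeries.C u + PowerSeries.C v := by
    simp [map_ofNat]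
  rw [e1, e2]
  linear_combination -(Cser v 1 - 1) * F u v 0 * h1 + F u v 0 ^ 2 * h2

lemma Y_iterate (m : ℕ) : (Cser v 1 - 1) * F u v 0 =
    PowerSeries.C (1 + v) *
        ∑ j ∈ Finset.range m, PowerSeries.C ((2 - u + v) ^ j) * F u v (j + 1) +
      (PowerSeries.C (2 - u + v) * (X * F u v 0)) ^ m * ((Cser v 1 - 1) * F u v 0) := by
  induction m with
  | zero => simp
  | succ m ih =>
    rw [Finset.sum_range_succ, F_succ_pow, map_pow]
    linear_combination ih + (PowerSeries.C (2 - u + v) * (X * F u v 0)) ^ m * Y_eq u v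

lemma coeff_Y (m : ℕ) : coeff m ((Cser v 1 - 1) * F u v 0) =
    (1 + v) * ∑ j ∈ Finset.range m, (2 - u + v) ^ j * G u v m 0 (j + 1) := by
  -- `Y = (S - 1) F 0` itself is divisible by `X`, so the remainder in `Y_iterate` is divisible
  -- by `X ^ (m + 1)`.
  obtain ⟨Z, hZ⟩ : ∃ Z, (Cser v 1 - 1) * F u v 0 = X * Z :=
    ⟨PowerSeries.C (1 + v) * F u v 0 ^ 2 +
      PowerSeries.C (2 - u + v) * F u v 0 * ((Cser v 1 - 1) * F u v 0), by
        linear_combination Y_eq u v⟩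
  have hrem : (PowerSeries.C (2 - u + v) * (X * F u v 0)) ^ m * ((Cser v 1 - 1) * F u v 0) =
      X ^ (m + 1) * ((PowerSeries.C (2 - u + v) * F u v 0) ^ m * Z) := by
    rw [hZ]; ring
  rw [Y_iterate u v m, hrem, map_add, coeff_C_mul, map_sum, coeff_X_pow_mul']
  simp only [coeff_C_mul, F, coeff_mk]
  simp

end Sums

end SchroederAux

/-- For every commutative ring `R`, `u v ∈ R` and `n ≥ 1`,
`r_{u,v}(n,0) = u⬝r_{u,v}(n-1,0) + (1+v)⬝Σ_{j=0}^{n-2} (2-u+v)^j ⬝ r_{u,v}(n-1,j+1)`. -/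
theorem stmt13 (R : Type*) [CommRing R] (u v : R) (n : ℕ) (hn : 1 ≤ n) :
    ruv R u v n 0 =
      u * ruv R u v (n - 1) 0 +
        (1 + v) * ∑ j ∈ Finset.range (n - 1), (2 - u + v) ^ j * ruv R u v (n - 1) (j + 1) := by
  obtain ⟨m, rfl⟩ : ∃ m, n = m + 1 := ⟨n - 1, by omega⟩
  simp only [SchroederAux.ruv_eq, Nat.add_sub_cancel]
  rw [← SchroederAux.coeff_Y]
  have h := congrArg (PowerSeries.coeff (m + 1)) (SchroederAux.F_zero u v)
  simp only [mul_assoc, map_add, PowerSeries.coeff_C_mul, PowerSeries.coeff_succ_X_mul] at h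
  simpa [SchroederAux.F, PowerSeries.coeff_one] using h
end

section
/- Let R be a commutative ring and u, v ∈ R. For all integers n ≥ 1 and 1 ≤ k ≤ n, r_{u,v}(n,k) = r_{u,v}(n-1,k-1) + u·r_{u,v}(n-1,k) + (1+v)·Σ_{j=k}^{n-2} (2-u+v)^{j-k} · r_{u,v}(n-1,j+1). -/
namespace SchroederHills

open SStep Finset

/-! ### Words from height `h` to height `0` -/

/-- The words from height `h` to height `0` that never go below `0` and have `n` steps in
`{U, H}`. For `h = 0` these are the Schröder paths of semilength `n`. -/
def paths : ℕ → ℕ → Finset (List SStep)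
  | 0, 0 => {[]}
  | 0, h + 1 => (paths 0 h).image (List.cons D)
  | n + 1, 0 => (paths n 1).image (List.cons U) ∪ (paths n 0).image (List.cons H)
  | n + 1, h + 1 => (paths n (h + 2)).image (List.cons U) ∪
      ((paths (n + 1) h).image (List.cons D) ∪ (paths n (h + 1)).image (List.cons H))

lemma forall_take_cons (a : SStep) (w : List SStep) (p : List SStep → Prop) :
    (∀ i, p ((a :: w).take i)) ↔ p [] ∧ ∀ i, p (a :: w.take i) := by
  constructor
  · intro h
    exact ⟨by simpa using h 0, fun i => by simpa using h (i + 1)⟩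
  · rintro ⟨h0, h1⟩ (_ | i)
    · simpa using h0
    · simpa using h1 i

lemma mem_paths (w : List SStep) : ∀ n h, w ∈ paths n h ↔
    h + w.count U = w.count D ∧ w.count U + w.count H = n ∧
      ∀ i, (w.take i).count D ≤ h + (w.take i).count U := by
  induction w with
  | nil =>
    rintro (_ | n) (_ | h) <;> simp [paths]
  | cons a w ih =>
    intro n h
    rw [forall_take_cons a w (fun l => l.count D ≤ h + l.count U)]
    rcases a with _ | _ | _
    · rcases n with _ | n <;> rcases h with _ | h <;>
        simp [paths, ih, add_comm, add_left_comm]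
      all_goals
        intros
        omega
    · rcases h with _ | h
      -- A first step `D` from height `0` already violates the prefix condition.
      · rcases n with _ | n <;> simp [paths]
        all_goals
          intros
          exact ⟨0, by simp⟩
      · rcases n with _ | n <;> simp [paths, ih]
        all_goals
          refine and_congr (by omega) (and_congr Iff.rfl (forall_congr' fun i => by omega))
    · rcases n with _ | n <;> rcases h with _ | h <;>
        simp [paths, ih, add_comm, add_left_comm]
      all_goals
        intros
        omega

lemma mem_paths_zero (n : ℕ) (w : List SStep) : w ∈ paths n 0 ↔ IsSchroeder n w := by
  simp [mem_paths, IsSchroeder]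

/-! ### Statistics of words starting at height `h` -/

/-- The number of hills of a word that starts at height `h`. -/
def hillsAt (h : ℕ) (w : List SStep) : ℕ :=
  ((range w.length).filter (fun i =>
    w[i]? = some U ∧ w[i+1]? = some D ∧ h + (w.take i).count U = (w.take i).count D)).card

/-- The number of `H` steps at height `0` of a word that starts at height `h`. -/
def groundAt (h : ℕ) (w : List SStep) : ℕ :=
  ((range w.length).filter (fun i =>
    w[i]? = some H ∧ h + (w.take i).count U = (w.take i).count D)).card

/-- The number of `H` steps at positive height of a word that starts at height `h`. -/
def aboveAt (h : ℕ) (w : List SStep) : ℕ :=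
  ((range w.length).filter (fun i =>
    w[i]? = some H ∧ (w.take i).count D < h + (w.take i).count U)).card

lemma card_filter_range_succ (p : ℕ → Prop) [DecidablePred p] (n : ℕ) :
    ((range (n + 1)).filter p).card =
      ((range n).filter (fun i => p (i + 1))).card + if p 0 then 1 else 0 := by
  simp only [card_filter]
  rw [sum_range_succ']

lemma hillsAt_U (h : ℕ) (w : List SStep) : hillsAt h (U :: w) =
    hillsAt (h + 1) w + if w[0]? = some D ∧ h = 0 then 1 else 0 := by
  simp [hillsAt, card_filter_range_succ, add_comm, add_left_comm]

lemma hillsAt_D (h : ℕ) (w : List SStep) : hillsAt (h + 1) (D :: w) = hillsAt h w := by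
  simp [hillsAt, card_filter_range_succ, add_right_comm _ 1]

lemma hillsAt_H (h : ℕ) (w : List SStep) : hillsAt h (H :: w) = hillsAt h w := by
  simp [hillsAt, card_filter_range_succ]

lemma groundAt_U (h : ℕ) (w : List SStep) : groundAt h (U :: w) = groundAt (h + 1) w := by
  simp [groundAt, card_filter_range_succ, add_comm, add_left_comm]

lemma groundAt_D (h : ℕ) (w : List SStep) : groundAt (h + 1) (D :: w) = groundAt h w := by
  simp [groundAt, card_filter_range_succ, add_right_comm _ 1]

lemma groundAt_H (h : ℕ) (w : List SStep) :
    groundAt h (H :: w) = groundAt h w + if h = 0 then 1 else 0 := by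
  simp [groundAt, card_filter_range_succ]

lemma aboveAt_U (h : ℕ) (w : List SStep) : aboveAt h (U :: w) = aboveAt (h + 1) w := by
  simp [aboveAt, card_filter_range_succ, add_comm, add_left_comm]

lemma aboveAt_D (h : ℕ) (w : List SStep) : aboveAt (h + 1) (D :: w) = aboveAt h w := by
  simp [aboveAt, card_filter_range_succ, add_right_comm _ 1]

lemma aboveAt_H (h : ℕ) (w : List SStep) :
    aboveAt h (H :: w) = aboveAt h w + if 0 < h then 1 else 0 := by
  simp [aboveAt, card_filter_range_succ]

section Weights

variable {R : Type*} [CommRing R] (u v : R)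

/-- The weight `u^{h0} v^{h}` of a word starting at height `h` if it has `k` hills, else `0`. -/
def wt (h k : ℕ) (w : List SStep) : R :=
  if hillsAt h w = k then u ^ groundAt h w * v ^ aboveAt h w else 0

lemma wt_U_pos (h k : ℕ) (w : List SStep) : wt u v (h + 1) k (U :: w) = wt u v (h + 2) k w := by
  simp [wt, hillsAt_U, groundAt_U, aboveAt_U]

lemma wt_D (h k : ℕ) (w : List SStep) : wt u v (h + 1) k (D :: w) = wt u v h k w := by
  simp [wt, hillsAt_D, groundAt_D, aboveAt_D]

lemma wt_H_zero (k : ℕ) (w : List SStep) : wt u v 0 k (H :: w) = u * wt u v 0 k w := by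
  simp [wt, hillsAt_H, groundAt_H, aboveAt_H, pow_succ', mul_assoc]

lemma wt_H_pos (h k : ℕ) (w : List SStep) :
    wt u v (h + 1) k (H :: w) = v * wt u v (h + 1) k w := by
  simp [wt, hillsAt_H, groundAt_H, aboveAt_H, pow_succ', mul_left_comm]

lemma wt_UU (k : ℕ) (w : List SStep) : wt u v 0 k (U :: U :: w) = wt u v 1 k (U :: w) := by
  simp [wt, hillsAt_U, groundAt_U, aboveAt_U]

lemma wt_UH (k : ℕ) (w : List SStep) : wt u v 0 k (U :: H :: w) = wt u v 1 k (H :: w) := by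
  simp [wt, hillsAt_U, groundAt_U, aboveAt_U]

lemma wt_UD_zero (w : List SStep) : wt u v 0 0 (U :: D :: w) = 0 := by
  simp [wt, hillsAt_U]

lemma wt_UD_succ (k : ℕ) (w : List SStep) :
    wt u v 0 (k + 1) (U :: D :: w) = wt u v 0 k w := by
  simp [wt, hillsAt_U, groundAt_U, aboveAt_U, hillsAt_D, groundAt_D, aboveAt_D]

/-! ### The recursion from the first step -/

/-- The total weight of the words in `paths n h` with `k` hills. -/
def P (n h k : ℕ) : R := ∑ w ∈ paths n h, wt u v h k w

/-- The total weight of the words `UDw` with `w ∈ paths n 0` that have `k` hills, the initial one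
included. -/
def hillFirst (n k : ℕ) : R := ∑ w ∈ paths n 0, wt u v 0 k (U :: D :: w)

lemma sum_image_cons (a : SStep) (s : Finset (List SStep)) (f : List SStep → R) :
    ∑ w ∈ s.image (List.cons a), f w = ∑ w ∈ s, f (a :: w) :=
  sum_image (by simp [Set.InjOn])

lemma disjoint_image_cons {a b : SStep} (hab : a ≠ b) (s t : Finset (List SStep)) :
    Disjoint (s.image (List.cons a)) (t.image (List.cons b)) := by
  rw [disjoint_left]
  simp only [mem_image]
  rintro _ ⟨x, -, rfl⟩ ⟨y, -, h⟩
  simp_all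

lemma sum_paths_zero_succ (h : ℕ) (f : List SStep → R) :
    ∑ w ∈ paths 0 (h + 1), f w = ∑ w ∈ paths 0 h, f (D :: w) := by
  rw [paths, sum_image_cons]

lemma sum_paths_succ_zero (n : ℕ) (f : List SStep → R) :
    ∑ w ∈ paths (n + 1) 0, f w =
      ∑ w ∈ paths n 1, f (U :: w) + ∑ w ∈ paths n 0, f (H :: w) := by
  rw [paths, sum_union (disjoint_image_cons (by decide) _ _), sum_image_cons, sum_image_cons]

lemma sum_paths_succ_succ (n h : ℕ) (f : List SStep → R) :
    ∑ w ∈ paths (n + 1) (h + 1), f w = ∑ w ∈ paths n (h + 2), f (U :: w) +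
      (∑ w ∈ paths (n + 1) h, f (D :: w) + ∑ w ∈ paths n (h + 1), f (H :: w)) := by
  rw [paths, sum_union, sum_union (disjoint_image_cons (by decide) _ _), sum_image_cons,
    sum_image_cons, sum_image_cons]
  rw [disjoint_union_right]
  exact ⟨disjoint_image_cons (by decide) _ _, disjoint_image_cons (by decide) _ _⟩

lemma P_zero (h k : ℕ) : P u v 0 h k = if k = 0 then 1 else 0 := by
  induction h with
  | zero => simp [P, paths, wt, hillsAt, groundAt, aboveAt, eq_comm]
  | succ h ih =>
    rw [P, sum_paths_zero_succ, ← ih]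
    simp only [wt_D, P]

lemma P_succ_succ (n h k : ℕ) :
    P u v (n + 1) (h + 1) k = P u v n (h + 2) k + P u v (n + 1) h k + v * P u v n (h + 1) k := by
  rw [P, sum_paths_succ_succ]
  simp only [wt_D, wt_U_pos, wt_H_pos, P, mul_sum]
  ring

/-- After a first step `U` from height `0`, the rest of the word is counted at height `1`, except
that a rest starting with `D` closes a hill. -/
lemma sum_U (n k : ℕ) : ∑ w ∈ paths n 1, wt u v 0 k (U :: w) =
    P u v n 1 k - P u v n 0 k + hillFirst u v n k := by
  rcases n with _ | n
  · rw [P, sum_paths_zero_succ, sum_paths_zero_succ]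
    simp only [wt_D, P, hillFirst]
    ring
  · rw [P, sum_paths_succ_succ, sum_paths_succ_succ]
    simp only [wt_D, P, hillFirst, wt_UU, wt_UH]
    ring

lemma P_succ_zero (n k : ℕ) : P u v (n + 1) 0 k =
    P u v n 1 k + (u - 1) * P u v n 0 k + hillFirst u v n k := by
  rw [P, sum_paths_succ_zero, sum_U]
  simp only [wt_H_zero, ← mul_sum]
  rw [← P]
  ring

lemma hillFirst_zero (n : ℕ) : hillFirst u v n 0 = 0 := by
  simp [hillFirst, wt_UD_zero]

lemma hillFirst_succ (n k : ℕ) : hillFirst u v n (k + 1) = P u v n 0 k := by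
  simp [hillFirst, wt_UD_succ, P]

lemma ruv_eq (n k : ℕ) : ruv R u v n k = P u v n 0 k := by
  have hs : {w : List SStep | IsSchroeder n w ∧ hills w = k} =
      ↑((paths n 0).filter (fun w => hillsAt 0 w = k)) := by
    ext w
    simp [mem_paths_zero, hills, hillsAt]
  rw [ruv, hs, finsum_mem_coe_finset, sum_filter, P]
  refine sum_congr rfl fun w _ => ?_
  simp [wt, h0, hpos, groundAt, aboveAt]

/-! ### Generating functions -/

open PowerSeries

/-- The coefficients of the series `S`. -/
def sCoeff : ℕ → R
  | 0 => 1
  | n + 1 => v * sCoeff n + ∑ i : Fin (n + 1), sCoeff i * sCoeff (n - i)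

/-- The generating function of Schröder paths in which every `H` has weight `v`. -/
def S : R⟦X⟧ := PowerSeries.mk (sCoeff v)

lemma S_eq : S v = 1 + X * (C v * S v + S v ^ 2) := by
  ext n
  rcases n with _ | n
  · simp [S, sCoeff]
  · rw [map_add, coeff_succ_X_mul, map_add, coeff_C_mul, sq, coeff_mul,
      Finset.Nat.sum_antidiagonal_eq_sum_range_succ_mk, coeff_one]
    simp [S, sCoeff, Finset.sum_range]

lemma exists_G (B : R⟦X⟧) : ∃ G : R⟦X⟧, G = 1 + X * B * G := by
  refine ⟨invOfUnit (1 - X * B) 1, ?_⟩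
  have h := mul_invOfUnit (1 - X * B) 1 (by simp)
  linear_combination h

/-- The series `x^k G^(k+1) S^h` satisfies the recursion of `P`. -/
lemma coeff_series {G : R⟦X⟧} (hG : G = 1 + X * (C u - 1 + S v) * G) (n : ℕ) :
    ∀ h k, P u v n h k = coeff n (X ^ k * G ^ (k + 1) * S v ^ h) := by
  have hS := S_eq v
  have hG0 : constantCoeff G = 1 := by
    rw [hG]; simp
  have hS0 : constantCoeff (S v) = 1 := by
    rw [hS]; simp
  induction n with
  | zero =>
    intro h k
    rw [P_zero]
    rcases k with _ | k <;> simp [hG0, hS0]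
  | succ n ih =>
    intro h
    induction h with
    | zero =>
      intro k
      rw [P_succ_zero, ih, ih]
      rcases k with _ | k
      · have e : X ^ 0 * G ^ (0 + 1) * S v ^ 0 = 1 + X * (X ^ 0 * G ^ (0 + 1) * S v ^ 1
            + C (u - 1) * (X ^ 0 * G ^ (0 + 1) * S v ^ 0)) := by
          simp only [map_sub, map_one]
          linear_combination hG
        have e' := congrArg (coeff (n + 1)) e
        rw [map_add, coeff_succ_X_mul, map_add, coeff_C_mul, coeff_one, if_neg n.succ_ne_zero] at e'
        rw [hillFirst_zero, e']
        ring
      · have e : X ^ (k + 1) * G ^ (k + 1 + 1) * S v ^ 0 =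
            X * (X ^ (k + 1) * G ^ (k + 1 + 1) * S v ^ 1
            + C (u - 1) * (X ^ (k + 1) * G ^ (k + 1 + 1) * S v ^ 0)
            + X ^ k * G ^ (k + 1) * S v ^ 0) := by
          simp only [map_sub, map_one]
          linear_combination X ^ (k + 1) * G ^ (k + 1) * hG
        rw [hillFirst_succ, ih, e, coeff_succ_X_mul, ← e, map_add, map_add, coeff_C_mul]
    | succ h ihh =>
      intro k
      have e : X ^ k * G ^ (k + 1) * S v ^ (h + 1) = X ^ k * G ^ (k + 1) * S v ^ h +
          X * (X ^ k * G ^ (k + 1) * S v ^ (h + 2) +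
            C v * (X ^ k * G ^ (k + 1) * S v ^ (h + 1))) := by
        linear_combination X ^ k * G ^ (k + 1) * S v ^ h * hS
      have e' := congrArg (coeff (n + 1)) e
      rw [map_add, coeff_succ_X_mul, map_add, coeff_C_mul] at e'
      rw [P_succ_succ, ih, ih, ihh, e']
      ring

/-- The defect `r(n+1,k+1) - r(n,k) - u r(n,k+1)` is the coefficient of
`x^(n+1)` in `E_(k+1) = x^(k+2) (S-1) G^(k+2)`; one factor `x` is cancelled here. -/
lemma defect_eq {G : R⟦X⟧} (hG : G = 1 + X * (C u - 1 + S v) * G) (n k : ℕ) :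
    P u v (n + 1) 0 (k + 1) - P u v n 0 k - u * P u v n 0 (k + 1) =
      coeff n (X ^ (k + 1) * (S v - 1) * G ^ (k + 2)) := by
  rw [P_succ_zero, hillFirst_succ, coeff_series u v hG n 1, coeff_series u v hG n 0 (k + 1)]
  have e : X ^ (k + 1) * (S v - 1) * G ^ (k + 2) = X ^ (k + 1) * G ^ (k + 1 + 1) * S v ^ 1 -
      X ^ (k + 1) * G ^ (k + 1 + 1) * S v ^ 0 := by ring
  rw [e, map_sub]
  ring

/-- The finite sum in the theorem, obtained by unrolling `E_k - q E_(k+1) = (1 + v) x F_(k+1)`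
from large `k` downwards: the left-hand side is the coefficient of `x^(n+1)` in `E_(k+1)`, which
vanishes for `k + 1 ≥ n`. The number `d` bounds how many steps are unrolled. -/
lemma defect_sum {G : R⟦X⟧} (hG : G = 1 + X * (C u - 1 + S v) * G) (n d : ℕ) :
    ∀ k, n ≤ k + 1 + d → coeff n (X ^ (k + 1) * (S v - 1) * G ^ (k + 2)) =
      (1 + v) * ∑ j ∈ Ico (k + 1) n, (2 - u + v) ^ (j - (k + 1)) * P u v n 0 (j + 1) := by
  have hS := S_eq v
  induction d with
  | zero =>
    intro k hk
    rw [Ico_eq_empty_of_le (by omega), sum_empty, mul_zero]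
    have e : X ^ (k + 1) * (S v - 1) * G ^ (k + 2) =
        X ^ (k + 2) * ((C v * S v + S v ^ 2) * G ^ (k + 2)) := by
      linear_combination X ^ (k + 1) * G ^ (k + 2) * hS
    rw [e, coeff_X_pow_mul', if_neg (by omega)]
  | succ d ih =>
    intro k hk
    rcases le_or_gt n (k + 1) with hnk | hnk
    · rw [ih k (by omega)]
    · have e : X ^ (k + 1) * (S v - 1) * G ^ (k + 2) =
          C (2 - u + v) * (X ^ (k + 1 + 1) * (S v - 1) * G ^ (k + 1 + 2)) +
          C (1 + v) * (X ^ (k + 1 + 1) * G ^ (k + 1 + 1 + 1) * S v ^ 0) := by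
        simp only [map_add, map_sub, map_one, map_ofNat]
        linear_combination -X ^ (k + 1) * (S v - 1) * G ^ (k + 2) * hG +
          X ^ (k + 1) * G ^ (k + 3) * hS
      rw [e, map_add, coeff_C_mul, coeff_C_mul, ← coeff_series u v hG, ih (k + 1) (by omega),
        sum_eq_sum_Ico_succ_bot hnk, mul_add, ← mul_assoc, mul_comm _ (1 + v), mul_assoc, mul_sum,
        add_comm]
      congr 1
      · simp
      · congr 1
        refine sum_congr rfl fun j hj => ?_
        have hj' := (mem_Ico.mp hj).1
        rw [show j - (k + 1) = j - (k + 1 + 1) + 1 by omega, pow_succ']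
        ring

end Weights

end SchroederHills

open SchroederHills in
/-- For every commutative ring `R`, `u v ∈ R`, `n ≥ 1` and `1 ≤ k ≤ n`,
`r_{u,v}(n,k) = r_{u,v}(n-1,k-1) + u⬝r_{u,v}(n-1,k)
  + (1+v)⬝Σ_{j=k}^{n-2} (2-u+v)^{j-k} ⬝ r_{u,v}(n-1,j+1)`. -/
theorem stmt14 (R : Type*) [CommRing R] (u v : R) (n k : ℕ)
    (hn : 1 ≤ n) (hk : 1 ≤ k) (hkn : k ≤ n) :
    ruv R u v n k =
      ruv R u v (n - 1) (k - 1) + u * ruv R u v (n - 1) k +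
        (1 + v) * ∑ j ∈ Finset.Ico k (n - 1),
          (2 - u + v) ^ (j - k) * ruv R u v (n - 1) (j + 1) := by
  obtain ⟨n, rfl⟩ := Nat.exists_eq_add_of_le' hn
  obtain ⟨k, rfl⟩ := Nat.exists_eq_add_of_le' hk
  simp only [ruv_eq, Nat.add_sub_cancel]
  obtain ⟨G, hG⟩ := exists_G (PowerSeries.C u - 1 + S v)
  rw [← defect_sum u v hG n n k (by omega), ← defect_eq u v hG n k]
  ring
end

section
/- Let R be a commutative ring and u, v ∈ R. For all integers 0 ≤ k ≤ n, r_{u,v}(n,k) = Σ Π_{i=1}^{k+1} r_{u,v}(n_i,0), where the sum is over all (k+1)-tuples (n_1,...,n_{k+1}) of nonnegative integers with n_1 + ... + n_{k+1} = n − k. (Equivalently, the weighted triangle [r_{u,v}(n,k)] is a u,v-weighted Riordan array of Bell type.) -/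
open SStep Finset

theorem card_filter_range_add (P Q S : ℕ → Prop) [DecidablePred P] [DecidablePred Q]
    [DecidablePred S] (m l : ℕ) (h₁ : ∀ i < m, (P i ↔ Q i)) (h₂ : ∀ i, P (m + i) ↔ S i) :
    ((range (m + l)).filter P).card = ((range m).filter Q).card + ((range l).filter S).card := by
  rw [← Nat.count_eq_card_filter_range, Nat.count_add, Nat.count_eq_card_filter_range,
    Nat.count_eq_card_filter_range]
  congr 2
  · exact filter_congr fun i hi => h₁ i (mem_range.1 hi)
  · exact filter_congr fun i _ => h₂ i

/-- No hill of `a ++ b` straddles the junction: a final `U` of `a` starting at height `0` would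
leave `a` at height `1`. -/
theorem hills_append (a b : List SStep) (ha : a.count U = a.count D) :
    hills (a ++ b) = hills a + hills b := by
  unfold hills
  rw [List.length_append]
  apply card_filter_range_add
  · intro i hi
    rw [List.take_append_of_le_length hi.le, List.getElem?_append_left hi]
    by_cases hi' : i + 1 < a.length
    · rw [List.getElem?_append_left hi']
    · have hlen : i + 1 = a.length := by omega
      have key : a[i]? = some U → (a.take i).count U ≠ (a.take i).count D := by
        intro h1 h2
        have h3 : a = a.take i ++ [U] := by
          conv_lhs => rw [← List.take_length (l := a), ← hlen, List.take_add_one, h1]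
          rfl
        have h4 := ha
        rw [h3] at h4
        simp [List.count_append, h2] at h4
      constructor
      · rintro ⟨h1, -, h2⟩
        exact absurd h2 (key h1)
      · rintro ⟨h1, -, h2⟩
        exact absurd h2 (key h1)
  · intro i
    simp [List.take_append, List.count_append, add_assoc, ha, List.take_of_length_le,
      List.getElem?_append_right]

theorem h0_append (a b : List SStep) (ha : a.count U = a.count D) :
    h0 (a ++ b) = h0 a + h0 b := by
  unfold h0
  rw [List.length_append]
  apply card_filter_range_add
  · intro i hi
    rw [List.take_append_of_le_length hi.le, List.getElem?_append_left hi]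
  · intro i
    simp [List.take_append, List.count_append, ha, List.take_of_length_le,
      List.getElem?_append_right]

theorem hpos_append (a b : List SStep) (ha : a.count U = a.count D) :
    hpos (a ++ b) = hpos a + hpos b := by
  unfold hpos
  rw [List.length_append]
  apply card_filter_range_add
  · intro i hi
    rw [List.take_append_of_le_length hi.le, List.getElem?_append_left hi]
  · intro i
    simp [List.take_append, List.count_append, ha, List.take_of_length_le,
      List.getElem?_append_right]

theorem hills_join (a b : List SStep) (ha : a.count U = a.count D) :
    hills (a ++ U :: D :: b) = hills a + 1 + hills b := by
  rw [hills_append _ _ ha, ← List.singleton_append, ← List.singleton_append (l := b),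
    ← List.append_assoc, hills_append _ _ (by decide)]
  have : hills ([U] ++ [D]) = 1 := by decide
  omega

theorem h0_join (a b : List SStep) (ha : a.count U = a.count D) :
    h0 (a ++ U :: D :: b) = h0 a + h0 b := by
  rw [h0_append _ _ ha, ← List.singleton_append, ← List.singleton_append (l := b),
    ← List.append_assoc, h0_append _ _ (by decide)]
  have : h0 ([U] ++ [D]) = 0 := by decide
  omega

theorem hpos_join (a b : List SStep) (ha : a.count U = a.count D) :
    hpos (a ++ U :: D :: b) = hpos a + hpos b := by
  rw [hpos_append _ _ ha, ← List.singleton_append, ← List.singleton_append (l := b),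
    ← List.append_assoc, hpos_append _ _ (by decide)]
  have : hpos ([U] ++ [D]) = 0 := by decide
  omega

theorem isSchroeder_join {i j : ℕ} {a b : List SStep} (ha : IsSchroeder i a)
    (hb : IsSchroeder j b) : IsSchroeder (i + j + 1) (a ++ U :: D :: b) := by
  obtain ⟨ha1, ha2, ha3⟩ := ha
  obtain ⟨hb1, hb2, hb3⟩ := hb
  refine ⟨?_, ?_, fun t => ?_⟩
  · simp [List.count_append]; omega
  · simp [List.count_append]; omega
  · rw [List.take_append, List.count_append, List.count_append]
    have h1 := ha3 t
    rcases t - a.length with _ | _ | m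
    · simpa using h1
    · simp; omega
    · have h2 := hb3 m
      simp; omega

theorem split_first_hill {m k : ℕ} {w : List SStep} (hw : IsSchroeder (m + 1) w)
    (hk : hills w = k + 1) :
    ∃ i j a b, i + j = m ∧ IsSchroeder i a ∧ hills a = 0 ∧ IsSchroeder j b ∧ hills b = k ∧
      a ++ U :: D :: b = w := by
  classical
  obtain ⟨hw1, hw2, hw3⟩ := hw
  have hex : ∃ i, w[i]? = some U ∧ w[i+1]? = some D ∧
      (w.take i).count U = (w.take i).count D := by
    have h : 0 < hills w := by omega
    obtain ⟨i, hi⟩ := Finset.card_pos.1 h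
    exact ⟨i, (mem_filter.1 hi).2⟩
  obtain ⟨hU, hD, hbal⟩ := Nat.find_spec hex
  have hmin := fun j => Nat.find_min (m := j) hex
  generalize Nat.find hex = p at hU hD hbal hmin
  obtain ⟨hp, hU'⟩ := List.getElem?_eq_some_iff.1 hU
  obtain ⟨hp1, hD'⟩ := List.getElem?_eq_some_iff.1 hD
  have hsplit : w.take p ++ U :: D :: w.drop (p + 2) = w := by
    conv_rhs => rw [← List.take_append_drop p w, List.drop_eq_getElem_cons hp,
      List.drop_eq_getElem_cons hp1, hU', hD']
  have hlen : (w.take p).length = p := by simp; omega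
  have hhills : hills (w.take p) = 0 := by
    refine Finset.card_eq_zero.2 (filter_eq_empty_iff.2 fun i hi h => ?_)
    rw [mem_range, hlen] at hi
    refine hmin i hi ?_
    obtain ⟨h1, h2, h3⟩ := h
    rw [List.take_take, min_eq_left hi.le] at h3
    refine ⟨?_, ?_, h3⟩
    · rwa [List.getElem?_take_of_lt hi] at h1
    · by_cases hi' : i + 1 < p
      · rwa [List.getElem?_take_of_lt hi'] at h2
      · rw [List.getElem?_eq_none (by omega)] at h2
        cases h2
  generalize w.take p = a at *
  generalize w.drop (p + 2) = b at *
  subst hsplit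
  rw [hills_join _ _ hbal] at hk
  simp [List.count_append] at hw1 hw2
  refine ⟨a.count U + a.count H, b.count U + b.count H, a, b, by omega, ⟨hbal, rfl, fun t => ?_⟩,
    hhills, ⟨by omega, rfl, fun t => ?_⟩, by omega, rfl⟩
  · by_cases ht : t ≤ a.length
    · simpa [List.take_append_of_le_length ht] using hw3 t
    · rw [List.take_of_length_le (by omega)]
      omega
  · have h := hw3 (a.length + (t + 2))
    rw [List.take_length_add_append] at h
    simp [List.count_append] at h
    omega

/-- The case where the prefix `a` is the shorter one. The excess `c` of `a'` cannot be a single step,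
since the factors `UD` at the two cuts do not overlap; if it is longer it starts with `UD`, which is
a hill of `a'`. -/
theorem first_hill_unique_aux {a b a' b' c : List SStep} (ha : a.count U = a.count D)
    (h0' : hills a' = 0) (hc : a' = a ++ c)
    (h : U :: D :: b = c ++ U :: D :: b') : a = a' ∧ b = b' := by
  rcases c with _ | ⟨x, _ | ⟨y, c⟩⟩
  · simp_all
  · simp at h
  · simp only [List.cons_append, List.cons.injEq] at h
    obtain ⟨rfl, rfl, -⟩ := h
    rw [hc, hills_join _ _ ha] at h0'
    omega

theorem first_hill_unique {a b a' b' : List SStep} (ha : a.count U = a.count D)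
    (ha' : a'.count U = a'.count D) (h0 : hills a = 0) (h0' : hills a' = 0)
    (h : a ++ U :: D :: b = a' ++ U :: D :: b') : a = a' ∧ b = b' := by
  rcases List.append_eq_append_iff.1 h with ⟨c, hc, h⟩ | ⟨c, hc, h⟩
  · exact first_hill_unique_aux ha h0' hc h
  · have := first_hill_unique_aux ha' h0 hc h
    exact ⟨this.1.symm, this.2.symm⟩

theorem length_eq_counts (w : List SStep) : w.length = w.count U + w.count D + w.count H := by
  induction w with
  | nil => rfl
  | cons x w ih => cases x <;> simp [ih] <;> omega

theorem finite_paths (n k : ℕ) : {w : List SStep | IsSchroeder n w ∧ hills w = k}.Finite := by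
  have : Finite SStep :=
    Finite.of_injective (fun x : SStep => (match x with | U => 0 | D => 1 | H => 2 : Fin 3))
      (by intro x y; cases x <;> cases y <;> simp)
  refine (List.finite_length_le SStep (2 * n)).subset ?_
  rintro w ⟨⟨h1, h2, -⟩, -⟩
  have := length_eq_counts w
  simp only [Set.mem_ofPred_eq]
  omega

theorem ruv_eq_sum (R : Type*) [CommRing R] (u v : R) (n k : ℕ) :
    ruv R u v n k = ∑ w ∈ (finite_paths n k).toFinset, u ^ h0 w * v ^ hpos w :=
  finsum_mem_eq_finite_toFinset_sum _ _

theorem ruv_succ_succ (R : Type*) [CommRing R] (u v : R) (m k : ℕ) :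
    ruv R u v (m + 1) (k + 1) =
      ∑ ij ∈ antidiagonal m, ruv R u v ij.1 0 * ruv R u v ij.2 k := by
  simp only [ruv_eq_sum, sum_mul_sum, ← sum_product']
  rw [sum_sigma']
  symm
  refine sum_bij (fun x _ => x.2.1 ++ U :: D :: x.2.2) ?_ ?_ ?_ ?_
  · rintro ⟨⟨i, j⟩, a, b⟩ h
    simp only [mem_sigma, HasAntidiagonal.mem_antidiagonal, mem_product, Set.Finite.mem_toFinset,
      Set.mem_ofPred_eq] at h ⊢
    obtain ⟨rfl, ⟨ha, ha0⟩, hb, rfl⟩ := h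
    refine ⟨isSchroeder_join ha hb, ?_⟩
    rw [hills_join _ _ ha.1]
    omega
  · rintro ⟨⟨i, j⟩, a, b⟩ h ⟨⟨i', j'⟩, a', b'⟩ h' heq
    simp only [mem_sigma, HasAntidiagonal.mem_antidiagonal, mem_product, Set.Finite.mem_toFinset,
      Set.mem_ofPred_eq] at h h' heq
    obtain ⟨-, ⟨ha, ha0⟩, hb, -⟩ := h
    obtain ⟨-, ⟨ha', ha0'⟩, hb', -⟩ := h'
    obtain ⟨rfl, rfl⟩ := first_hill_unique ha.1 ha'.1 ha0 ha0' heq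
    obtain rfl := ha.2.1.symm.trans ha'.2.1
    obtain rfl := hb.2.1.symm.trans hb'.2.1
    rfl
  · intro w hw
    simp only [Set.Finite.mem_toFinset, Set.mem_ofPred_eq] at hw
    obtain ⟨i, j, a, b, hij, ha, ha0, hb, hbk, hw'⟩ := split_first_hill hw.1 hw.2
    refine ⟨⟨(i, j), a, b⟩, ?_, hw'⟩
    simp only [mem_sigma, HasAntidiagonal.mem_antidiagonal, mem_product, Set.Finite.mem_toFinset,
      Set.mem_ofPred_eq]
    exact ⟨hij, ⟨ha, ha0⟩, hb, hbk⟩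
  · rintro ⟨⟨i, j⟩, a, b⟩ h
    simp only [mem_sigma, HasAntidiagonal.mem_antidiagonal, mem_product, Set.Finite.mem_toFinset,
      Set.mem_ofPred_eq] at h
    simp only [h0_join _ _ h.2.1.1.1, hpos_join _ _ h.2.1.1.1]
    ring

theorem sum_antidiagonalTuple_succ {R : Type*} [CommRing R] (f : ℕ → R) (k m : ℕ) :
    ∑ t ∈ Finset.Nat.antidiagonalTuple (k + 1) m, ∏ i, f (t i) =
      ∑ ij ∈ antidiagonal m,
        f ij.1 * ∑ t ∈ Finset.Nat.antidiagonalTuple k ij.2, ∏ i, f (t i) := by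
  simp only [mul_sum]
  rw [sum_sigma']
  symm
  refine sum_bij (fun x _ => Fin.cons x.1.1 x.2) ?_ ?_ ?_ ?_
  · rintro ⟨⟨i, j⟩, t⟩ h
    simp only [mem_sigma, HasAntidiagonal.mem_antidiagonal, Finset.Nat.mem_antidiagonalTuple] at h ⊢
    rw [Fin.sum_cons, h.2, h.1]
  · rintro ⟨⟨i, j⟩, t⟩ h ⟨⟨i', j'⟩, t'⟩ h' heq
    simp only [mem_sigma, HasAntidiagonal.mem_antidiagonal, Finset.Nat.mem_antidiagonalTuple] at h h'
    obtain ⟨rfl, rfl⟩ := Fin.cons_injective2 heq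
    obtain rfl := h.2.symm.trans h'.2
    rfl
  · intro t ht
    rw [Finset.Nat.mem_antidiagonalTuple, Fin.sum_univ_succ] at ht
    refine ⟨⟨(t 0, ∑ i, Fin.tail t i), Fin.tail t⟩, ?_, Fin.cons_self_tail t⟩
    simp only [mem_sigma, HasAntidiagonal.mem_antidiagonal, Finset.Nat.mem_antidiagonalTuple]
    exact ⟨ht, trivial⟩
  · rintro ⟨⟨i, j⟩, t⟩ -
    simp [Fin.prod_univ_succ]

theorem ruv_eq_zero (R : Type*) [CommRing R] (u v : R) (k : ℕ) :
    ∀ n < k, ruv R u v n k = 0 := by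
  induction k with
  | zero => intro n hn; omega
  | succ k ih =>
    rintro (_ | n) hn
    · rw [ruv_eq_sum]
      refine sum_eq_zero fun w hw => ?_
      simp only [Set.Finite.mem_toFinset, Set.mem_ofPred_eq] at hw
      obtain ⟨⟨h1, h2, -⟩, h3⟩ := hw
      have hlen := length_eq_counts w
      have hw : w = [] := List.length_eq_zero_iff.1 (by omega)
      subst hw
      simp [hills] at h3
    · rw [ruv_succ_succ]
      refine sum_eq_zero fun ij hij => ?_
      rw [HasAntidiagonal.mem_antidiagonal] at hij
      rw [ih _ (by omega), mul_zero]

/-- The main identity with `n = m + k`, which avoids the truncated subtraction. -/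
theorem ruv_add_eq (R : Type*) [CommRing R] (u v : R) (k : ℕ) : ∀ m : ℕ,
    ruv R u v (m + k) k =
      ∑ t ∈ Finset.Nat.antidiagonalTuple (k + 1) m, ∏ i, ruv R u v (t i) 0 := by
  induction k with
  | zero => intro m; simp
  | succ k ih =>
    intro m
    rw [sum_antidiagonalTuple_succ (fun n => ruv R u v n 0), ← add_assoc, ruv_succ_succ]
    simp only [← ih]
    rw [Finset.Nat.sum_antidiagonal_eq_sum_range_succ (fun i j => ruv R u v i 0 * ruv R u v j k),
      Finset.Nat.sum_antidiagonal_eq_sum_range_succ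
        (fun i j => ruv R u v i 0 * ruv R u v (j + k) k)]
    symm
    -- The terms with `m < i` vanish: a path of semilength `m + k - i < k` has fewer than `k` hills.
    have hsub : range (m + 1) ⊆ range (m + k + 1) := range_subset_range.2 (by omega)
    rw [← sum_subset hsub]
    · refine sum_congr rfl fun i hi => ?_
      rw [mem_range] at hi
      rw [show m - i + k = m + k - i by omega]
    · intro i hi hi'
      rw [mem_range] at hi hi'
      rw [ruv_eq_zero R u v k _ (by omega), mul_zero]

/-- For every commutative ring `R`, `u v ∈ R` and `0 ≤ k ≤ n`, `r_{u,v}(n,k)` is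
the sum, over all `(k+1)`-tuples of nonnegative integers summing to `n - k`, of
the products `Π_i r_{u,v}(n_i, 0)`. -/
theorem stmt15 (R : Type*) [CommRing R] (u v : R) (n k : ℕ) (hkn : k ≤ n) :
    ruv R u v n k =
      ∑ t ∈ Finset.Nat.antidiagonalTuple (k + 1) (n - k), ∏ i, ruv R u v (t i) 0 := by
  have h := ruv_add_eq R u v k (n - k)
  rwa [Nat.sub_add_cancel hkn] at h
end
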